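/- arXiv:1412.4106 — 3 statements merged into one kernel-verified Lean document; each statement's English description precedes it below -/
import Mathlib

section
/- With H and φ as in the hairpin construction, there exists a numerical constant c₀ > 0 such that |∇H(x)| ≥ min(1/2, c₀|x|) for all x ∈ Ω₁. -/
open Complex

lemma hp_cosh_ge (a : ℝ) : 1 + a^2/2 ≤ Real.cosh a := by
  have h : a = 2 * (a/2) := by ring
  rw [h, Real.cosh_two_mul, Real.cosh_sq]
  have : (a/2)^2 ≤ Real.sinh (a/2)^2 := by
    rw [sq_le_sq]
    rcases le_total 0 (a/2) with h0 | h0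
    · rw [abs_of_nonneg h0]
      exact (Real.self_le_sinh_iff.2 h0).trans (le_abs_self _)
    · rw [abs_of_nonpos h0]
      exact (neg_le_neg (Real.sinh_le_self_iff.2 h0)).trans (neg_le_abs _)
  nlinarith

lemma hp_grad (V : ℂ → ℂ) (H : ℂ → ℝ) (hH : ∀ z, H z = (V z).re) (x d : ℂ)
    (h : HasDerivAt V d x) : ‖gradient H x‖ = ‖d‖ := by
  have h1 : HasFDerivAt H (Complex.reCLM.comp
      ((ContinuousLinearMap.toSpanSingleton ℂ d).restrictScalars ℝ)) x := by
    have e : H = fun z => Complex.reCLM (V z) := by funext z; simp [hH]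
    rw [e]
    exact Complex.reCLM.hasFDerivAt.comp x (h.hasFDerivAt.restrictScalars ℝ)
  have h2 : HasGradientAt H ((starRingEnd ℂ) d) x := by
    rw [hasGradientAt_iff_hasFDerivAt]
    refine h1.congr_fderiv ?_
    refine ContinuousLinearMap.ext fun w => ?_
    rw [InnerProductSpace.toDual_apply_apply, Complex.inner]
    simp
    try ring
  rw [h2.gradient, RCLike.norm_conj]

lemma hp_key (ζ d : ℂ) (hb : |ζ.im| < Real.pi/2)
    (h : d * (I * (1 + Complex.cosh ζ)) = Complex.sinh ζ) :
    min (1/2) (1/10 * ‖I * (ζ + Complex.sinh ζ)‖) ≤ ‖d‖ := by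
  set a := ζ.re with ha
  set b := ζ.im with hb'
  have hz : ζ = a + b * I := (Complex.re_add_im ζ).symm
  have hc : 0 < Real.cos b := Real.cos_pos_of_mem_Ioo (by rw [abs_lt] at hb; constructor <;> linarith [hb.1, hb.2])
  have hC := hp_cosh_ge a
  have hcos : Real.cos b ≤ 1 - 2 / Real.pi^2 * b^2 :=
    Real.cos_le_one_sub_mul_cos_sq (by linarith [Real.pi_pos])
  have hpi : 2 / Real.pi^2 ≥ 1/8 := by
    rw [ge_iff_le, div_le_div_iff₀ (by norm_num) (by positivity)]
    nlinarith [Real.pi_pos, Real.pi_le_four]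
  have hD : ‖ζ‖^2 ≤ 8 * (Real.cosh a - Real.cos b) := by
    rw [← Complex.normSq_eq_norm_sq, Complex.normSq_apply, ← ha, ← hb']
    nlinarith [sq_nonneg a, sq_nonneg b, mul_le_mul_of_nonneg_right hpi (sq_nonneg b)]
  have e1 : Complex.sinh ζ = ((Real.sinh a * Real.cos b : ℝ) : ℂ) + ((Real.cosh a * Real.sin b : ℝ) : ℂ) * I := by
    rw [hz, Complex.sinh_add, Complex.sinh_mul_I, Complex.cosh_mul_I]; push_cast; ring
  have e2 : 1 + Complex.cosh ζ = ((1 + Real.cosh a * Real.cos b : ℝ) : ℂ) + ((Real.sinh a * Real.sin b : ℝ) : ℂ) * I := by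
    rw [hz, Complex.cosh_add, Complex.sinh_mul_I, Complex.cosh_mul_I]; push_cast; ring
  have hs := Real.sin_sq b
  have hS := Real.sinh_sq a
  have n1 : ‖Complex.sinh ζ‖^2 = (Real.cosh a - Real.cos b) * (Real.cosh a + Real.cos b) := by
    rw [← Complex.normSq_eq_norm_sq, e1, Complex.normSq_add_mul_I, mul_pow, mul_pow, hs, hS]; ring
  have n2 : ‖1 + Complex.cosh ζ‖^2 = (Real.cosh a + Real.cos b)^2 := by
    rw [← Complex.normSq_eq_norm_sq, e2, Complex.normSq_add_mul_I, mul_pow _ (Real.sin b), hs, hS]; ring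
  have n3 : ‖d‖^2 * (Real.cosh a + Real.cos b) = Real.cosh a - Real.cos b := by
    have := congrArg (fun z => ‖z‖^2) h
    simp only [norm_mul, Complex.norm_I, one_mul, mul_pow, n1, n2] at this
    have hp : Real.cosh a + Real.cos b ≠ 0 := by nlinarith [sq_nonneg a]
    apply mul_right_cancel₀ hp
    linarith
  generalize Real.cosh a = C at *
  generalize Real.cos b = c at *
  have hC1 : 1 ≤ C := by nlinarith [sq_nonneg a]
  have hd := norm_nonneg d
  by_cases hcase : 5 * c ≤ 3 * C
  · apply min_le_of_left_le
    by_contra hlt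
    push Not at hlt
    have : ‖d‖^2 < 1/4 := by nlinarith
    nlinarith
  · push Not at hcase
    apply min_le_of_right_le
    have hc1 : c ≤ 1 := by
      have : 0 ≤ 2 / Real.pi^2 * b^2 := by positivity
      linarith
    clear hcos hC hpi hs hS e1 e2 h n2
    have hDn : 0 ≤ C - c := by linarith
    have t : ‖I * (ζ + Complex.sinh ζ)‖ ≤ ‖ζ‖ + ‖Complex.sinh ζ‖ := by
      rw [norm_mul, Complex.norm_I, one_mul]; exact norm_add_le _ _
    have q1 : ‖Complex.sinh ζ‖^2 ≤ 8/3 * (C - c) := by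
      rw [n1]; nlinarith [mul_nonneg hDn (by linarith : 0 ≤ 8/3 - (C + c))]
    have q2 : 3/8 * (C - c) ≤ ‖d‖^2 := by
      linarith [mul_nonneg (sq_nonneg ‖d‖) (by linarith : 0 ≤ 8/3 - (C + c))]
    have q3 : (‖ζ‖ + ‖Complex.sinh ζ‖)^2 ≤ 32 * (C - c) := by
      nlinarith [sq_nonneg (‖ζ‖ - ‖Complex.sinh ζ‖)]
    have q4 : 1/10 * (‖ζ‖ + ‖Complex.sinh ζ‖) ≤ ‖d‖ := by
      apply le_of_sq_le_sq _ hd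
      rw [mul_pow]; linarith
    linarith

/-- Lower bound for the gradient of the hairpin solution: with `H` and `φ`
as in the hairpin construction, there is a numerical constant `c₀ > 0` with
`|∇H(x)| ≥ min(1/2, c₀|x|)` for all `x ∈ Ω₁`. -/
theorem hairpin_gradient_lower_bound
    (S : Set ℂ) (hS : S = {ζ : ℂ | |ζ.im| < Real.pi / 2})
    (Ω₁ : Set ℂ) (hΩ : Ω₁ = {z : ℂ | |z.re| < Real.pi / 2 + Real.cosh z.im})
    (φ : ℂ → ℂ) (hφ : ∀ ζ, φ ζ = I * (ζ + Complex.sinh ζ))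
    (hmaps : Set.MapsTo φ S Ω₁)
    (hsurj : ∀ x ∈ Ω₁, ∃ ζ ∈ S, φ ζ = x)
    (V : ℂ → ℂ) (hV : DifferentiableOn ℂ V Ω₁)
    (hVφ : ∀ ζ ∈ S, V (φ ζ) = Complex.cosh ζ)
    (H : ℂ → ℝ) (hH : ∀ z, H z = (V z).re) :
    ∃ c₀ > (0 : ℝ), ∀ x ∈ Ω₁, min (1 / 2) (c₀ * ‖x‖) ≤ ‖gradient H x‖ := by
  refine ⟨1/10, by norm_num, fun x hx => ?_⟩
  have oS : IsOpen S := by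
    rw [hS]; exact isOpen_lt (Complex.continuous_im.abs) continuous_const
  have oΩ : IsOpen Ω₁ := by
    rw [hΩ]
    exact isOpen_lt (Complex.continuous_re.abs)
      (continuous_const.add (Real.continuous_cosh.comp Complex.continuous_im))
  obtain ⟨ζ, hζ, rfl⟩ := hsurj x hx
  have hd : HasDerivAt V (deriv V (φ ζ)) (φ ζ) :=
    (hV.differentiableAt (oΩ.mem_nhds hx)).hasDerivAt
  rw [hp_grad V H hH _ _ hd, hφ ζ, ← hφ ζ]
  have hφ' : HasDerivAt φ (I * (1 + Complex.cosh ζ)) ζ := by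
    rw [show φ = fun ζ => I * (ζ + Complex.sinh ζ) from funext hφ]
    exact ((hasDerivAt_id ζ).add (Complex.hasDerivAt_sinh ζ)).const_mul I
  have hc := hd.comp ζ hφ'
  have he : V ∘ φ =ᶠ[nhds ζ] Complex.cosh := by
    filter_upwards [oS.mem_nhds hζ] with w hw using hVφ w hw
  have := (hc.congr_of_eventuallyEq he.symm).unique (Complex.hasDerivAt_cosh ζ)
  have hk := hp_key ζ _ (by rw [hS] at hζ; exact hζ) this
  rwa [← hφ ζ] at hk
end

section
/- Non-degeneracy of classical solutions: let u be a classical solution of the one-phase free boundary problem in B_R(0) ⊂ ℝ² with no compact connected component of the free boundary, and assume 0 ∈ F(u). Then for all 0 < r < R, sup_{B_r(0)} u = max_{∂B_r(0)} u ≥ r/(2π). -/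
open Filter Metric

noncomputable def lap (v : EuclideanSpace ℝ (Fin 2) → ℝ) (x : EuclideanSpace ℝ (Fin 2)) : ℝ :=
  ∑ i : Fin 2, fderiv ℝ (fun y => fderiv ℝ v y (EuclideanSpace.single i 1)) x
    (EuclideanSpace.single i 1)

namespace ND

local notation "E2" => EuclideanSpace ℝ (Fin 2)

noncomputable def ee (t : ℝ) : E2 :=
  Real.cos t • EuclideanSpace.single 0 1 + Real.sin t • EuclideanSpace.single 1 1

noncomputable def nn (t : ℝ) : E2 :=
  (-Real.sin t) • EuclideanSpace.single 0 1 + Real.cos t • EuclideanSpace.single 1 1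

lemma ee_deriv (t : ℝ) : HasDerivAt ee (nn t) t := by
  unfold ee nn
  exact ((Real.hasDerivAt_cos t).smul_const _).add ((Real.hasDerivAt_sin t).smul_const _)

lemma nn_deriv (t : ℝ) : HasDerivAt nn (-ee t) t := by
  have := ((Real.hasDerivAt_sin t).neg.smul_const (EuclideanSpace.single (0 : Fin 2) (1:ℝ))).add
    ((Real.hasDerivAt_cos t).smul_const (EuclideanSpace.single (1 : Fin 2) (1:ℝ)))
  have h2 : -ee t = (-Real.cos t) • EuclideanSpace.single (0 : Fin 2) (1:ℝ) +
    (-Real.sin t) • EuclideanSpace.single (1 : Fin 2) (1:ℝ) := by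
    unfold ee; module
  rw [h2]
  exact this

lemma ee_cont : Continuous ee := by unfold ee; fun_prop
lemma nn_cont : Continuous nn := by unfold nn; fun_prop

lemma ee_norm (t : ℝ) : ‖ee t‖ = 1 := by
  rw [EuclideanSpace.norm_eq]
  simp [ee, Fin.sum_univ_two]

lemma nn_norm (t : ℝ) : ‖nn t‖ = 1 := by
  rw [EuclideanSpace.norm_eq]
  simp [nn, Fin.sum_univ_two]

lemma ee_periodic : Function.Periodic ee (2 * Real.pi) := by
  intro t; simp [ee]

lemma nn_periodic : Function.Periodic nn (2 * Real.pi) := by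
  intro t; simp [nn]

lemma param_deriv (F F' : ℝ → ℝ → ℝ) (hF : ∀ s, Continuous (F s))
    (hF' : Continuous (fun p : ℝ × ℝ => F' p.1 p.2))
    (hd : ∀ s t, HasDerivAt (fun s => F s t) (F' s t) s) (a b : ℝ) (s : ℝ) :
    HasDerivAt (fun s => ∫ t in a..b, F s t) (∫ t in a..b, F' s t) s := by
  obtain ⟨C, hC⟩ := ((isCompact_closedBall s 1).prod (isCompact_uIcc (a := a) (b := b))).exists_bound_of_continuousOn hF'.continuousOn
  refine (intervalIntegral.hasDerivAt_integral_of_dominated_loc_of_deriv_le (bound := fun _ => C)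
    (closedBall_mem_nhds s one_pos) ?_ ((hF s).intervalIntegrable _ _) ?_ ?_ ?_ ?_).2
  · exact Eventually.of_forall fun x => (hF x).aestronglyMeasurable
  · exact (hF'.comp (Continuous.prodMk_right s)).aestronglyMeasurable
  · refine Eventually.of_forall fun t ht x hx => hC (x, t) ⟨hx, ?_⟩
    exact Set.uIoc_subset_uIcc ht
  · simp
  · exact Eventually.of_forall fun t _ x _ => hd x t

lemma lap_polar (w : E2 → ℝ) (hw : ContDiff ℝ 2 w) (x : E2) (t : ℝ) :
    lap w x = fderiv ℝ (fderiv ℝ w) x (ee t) (ee t) + fderiv ℝ (fderiv ℝ w) x (nn t) (nn t) := by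
  have hd : Differentiable ℝ (fderiv ℝ w) :=
    (hw.fderiv_right (m := 1) (by norm_num)).differentiable (by norm_num)
  have h : ∀ a : E2, fderiv ℝ (fun y => fderiv ℝ w y a) x a = fderiv ℝ (fderiv ℝ w) x a a := by
    intro a
    have := ((hd x).hasFDerivAt.clm_apply (hasFDerivAt_const a x)).fderiv
    rw [this]; simp
  unfold lap
  simp only [h, Fin.sum_univ_two, ee, nn, map_add, map_smul, add_apply,
    smul_apply, smul_eq_mul]
  linear_combination (-(fderiv ℝ (fderiv ℝ w) x (EuclideanSpace.single 0 1) (EuclideanSpace.single 0 1)) - (fderiv ℝ (fderiv ℝ w) x (EuclideanSpace.single 1 1) (EuclideanSpace.single 1 1))) * (Real.sin_sq_add_cos_sq t)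

lemma clm_deriv (L : E2 → (E2 →L[ℝ] ℝ)) (hL : Differentiable ℝ L) (γ m : ℝ → E2) (γ' m' : E2) (t : ℝ)
    (hγ : HasDerivAt γ γ' t) (hm : HasDerivAt m m' t) :
    HasDerivAt (fun t => L (γ t) (m t)) (fderiv ℝ L (γ t) γ' (m t) + L (γ t) m') t := by
  have h1 : HasDerivAt (fun t => L (γ t)) (fderiv ℝ L (γ t) γ') t :=
    (hL (γ t)).hasFDerivAt.comp_hasDerivAt t hγ
  exact h1.clm_apply hm

lemma polar (w : E2 → ℝ) (hw : ContDiff ℝ 2 w) (s : ℝ) :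
    HasDerivAt (fun s : ℝ => ∫ t in (0:ℝ)..(2 * Real.pi), w (s • ee t))
      (∫ t in (0:ℝ)..(2 * Real.pi), fderiv ℝ w (s • ee t) (ee t)) s ∧
    (0 < s → HasDerivAt (fun s : ℝ => s * ∫ t in (0:ℝ)..(2 * Real.pi), fderiv ℝ w (s • ee t) (ee t))
      (s * ∫ t in (0:ℝ)..(2 * Real.pi), lap w (s • ee t)) s) := by
  have hwd : Differentiable ℝ w := hw.differentiable (by norm_num)
  have hw1 : ContDiff ℝ 1 (fderiv ℝ w) := hw.fderiv_right (m := 1) (by norm_num)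
  have hd : Differentiable ℝ (fderiv ℝ w) := hw1.differentiable (by norm_num)
  have hc1 : Continuous (fderiv ℝ w) := hw1.continuous
  have hc2 : Continuous (fderiv ℝ (fderiv ℝ w)) := hw1.continuous_fderiv (by norm_num)
  have he := ee_cont
  have hn := nn_cont
  have hray : ∀ (t s : ℝ), HasDerivAt (fun s : ℝ => s • ee t) (ee t) s := fun t s => by
    simpa using (hasDerivAt_id s).smul_const (ee t)
  refine ⟨?_, fun hs => ?_⟩
  · refine param_deriv (fun s t => w (s • ee t)) (fun s t => fderiv ℝ w (s • ee t) (ee t)) ?_ ?_ ?_ _ _ s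
    · intro s; have := hw.continuous; fun_prop
    · fun_prop
    · intro s t
      exact (hwd _).hasFDerivAt.comp_hasDerivAt s (hray t s)
  · have h2 : HasDerivAt (fun s : ℝ => ∫ t in (0:ℝ)..(2 * Real.pi), fderiv ℝ w (s • ee t) (ee t))
        (∫ t in (0:ℝ)..(2 * Real.pi), fderiv ℝ (fderiv ℝ w) (s • ee t) (ee t) (ee t)) s := by
      refine param_deriv (fun s t => fderiv ℝ w (s • ee t) (ee t))
        (fun s t => fderiv ℝ (fderiv ℝ w) (s • ee t) (ee t) (ee t)) ?_ ?_ ?_ _ _ s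
      · intro s; fun_prop
      · fun_prop
      · intro s t
        have := clm_deriv (fderiv ℝ w) hd (fun s : ℝ => s • ee t) (fun _ => ee t) (ee t) 0 s (hray t s)
          (hasDerivAt_const s (ee t))
        rwa [map_zero, add_zero] at this
    have h3 := (hasDerivAt_id s).mul h2
    -- angular integral vanishes
    have h4 : ∀ t, HasDerivAt (fun t => fderiv ℝ w (s • ee t) (nn t))
        (fderiv ℝ (fderiv ℝ w) (s • ee t) (s • nn t) (nn t) + fderiv ℝ w (s • ee t) (- ee t)) t := by
      intro t
      exact clm_deriv (fderiv ℝ w) hd (fun t : ℝ => s • ee t) nn (s • nn t) (- ee t) t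
        ((ee_deriv t).const_smul s) (nn_deriv t)
    have c1 : Continuous (fun t => fderiv ℝ (fderiv ℝ w) (s • ee t) (s • nn t) (nn t)) := by fun_prop
    have c2 : Continuous (fun t => fderiv ℝ w (s • ee t) (- ee t)) := by fun_prop
    have c3 : Continuous (fun t => fderiv ℝ (fderiv ℝ w) (s • ee t) (ee t) (ee t)) := by fun_prop
    have c4 : Continuous (fun t => fderiv ℝ (fderiv ℝ w) (s • ee t) (nn t) (nn t)) := by fun_prop
    have c5 : Continuous (fun t => fderiv ℝ w (s • ee t) (ee t)) := by fun_prop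
    have h5 := intervalIntegral.integral_eq_sub_of_hasDerivAt (a := 0) (b := 2 * Real.pi)
      (fun t _ => h4 t) ((c1.add c2).intervalIntegrable _ _)
    have h6 : ee (2 * Real.pi) = ee 0 := by simpa using ee_periodic 0
    have h7 : nn (2 * Real.pi) = nn 0 := by simpa using nn_periodic 0
    rw [h6, h7, sub_self] at h5
    have h8 : (fun t => lap w (s • ee t)) = fun t => fderiv ℝ (fderiv ℝ w) (s • ee t) (ee t) (ee t)
      + fderiv ℝ (fderiv ℝ w) (s • ee t) (nn t) (nn t) := by
      ext t; exact lap_polar w hw _ t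
    have h9 : (fun t => fderiv ℝ (fderiv ℝ w) (s • ee t) (s • nn t) (nn t) + fderiv ℝ w (s • ee t) (- ee t))
      = fun t => s * fderiv ℝ (fderiv ℝ w) (s • ee t) (nn t) (nn t) - fderiv ℝ w (s • ee t) (ee t) := by
      ext t
      rw [map_smul, map_neg, smul_apply, smul_eq_mul]; ring
    rw [h9, intervalIntegral.integral_sub ((c4.const_mul s).intervalIntegrable _ _)
      (c5.intervalIntegrable _ _), intervalIntegral.integral_const_mul] at h5
    refine h3.congr_deriv ?_
    rw [h8, intervalIntegral.integral_add (c3.intervalIntegrable _ _) (c4.intervalIntegrable _ _)]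
    simp only [id]
    linarith

lemma grad_norm_sq (u : E2 → ℝ) (x : E2) : ‖gradient u x‖ ^ 2 =
    ∑ i : Fin 2, (fderiv ℝ u x (EuclideanSpace.single i 1)) ^ 2 := by
  rw [EuclideanSpace.norm_sq_eq]
  refine Finset.sum_congr rfl fun i _ => ?_
  have : fderiv ℝ u x (EuclideanSpace.single i 1) = gradient u x i := by
    have h := InnerProductSpace.toDual_symm_apply (𝕜 := ℝ) (x := EuclideanSpace.single i (1:ℝ)) (y := fderiv ℝ u x)
    rw [← h, EuclideanSpace.inner_single_right]
    simp [gradient]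
  rw [this]; simp

lemma norm_grad (u : E2 → ℝ) (x : E2) : ‖gradient u x‖ = ‖fderiv ℝ u x‖ := by
  simp [gradient]

lemma not_max_1d (f f' : ℝ → ℝ) (c : ℝ) (hc : 0 < c) (h1 : ∀ᶠ t in nhds 0, HasDerivAt f (f' t) t)
    (h2 : HasDerivAt f' c 0) : ¬ IsLocalMax f 0 := by
  intro hm
  have e : deriv f =ᶠ[nhds 0] f' := h1.mono fun t ht => ht.deriv
  have hd2 : deriv (deriv f) 0 = c := by rw [e.deriv_eq, h2.deriv]
  have hmin : IsLocalMin f 0 := isLocalMin_of_deriv_deriv_pos (by rw [hd2]; exact hc) hm.deriv_eq_zero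
    h1.self_of_nhds.continuousAt
  have hconst : f =ᶠ[nhds 0] fun _ => f 0 := by
    filter_upwards [hm, hmin] with t a b using le_antisymm a b
  have h3 : deriv f =ᶠ[nhds 0] fun _ => 0 := by
    filter_upwards [hconst.eventuallyEq_nhds] with t ht
    rw [ht.deriv_eq]; simp
  rw [h3.deriv_eq] at hd2
  simp at hd2
  linarith

lemma max_princ (R : ℝ) (u : E2 → ℝ)
    (hcont : ContinuousOn u (ball (0 : E2) R))
    (hsm : ∀ x ∈ ball (0 : E2) R, 0 < u x → ContDiffAt ℝ 2 u x)
    (hharm : ∀ x ∈ ball (0 : E2) R, 0 < u x → lap u x = 0)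
    (ρ M : ℝ) (hρ : 0 < ρ) (hρR : ρ < R) (hM : 0 ≤ M) (hs : ∀ x ∈ sphere (0 : E2) ρ, u x ≤ M) :
    ∀ x ∈ closedBall (0 : E2) ρ, u x ≤ M := by
  intro y hy
  by_contra! hlt
  set ε := (u y - M) / (2 * ρ ^ 2) with hε
  have hε0 : 0 < ε := by apply div_pos <;> [linarith; positivity]
  have hεe : 2 * (ε * ρ ^ 2) = u y - M := by rw [hε]; field_simp
  have hsub : closedBall (0 : E2) ρ ⊆ ball 0 R := closedBall_subset_ball hρR
  obtain ⟨z, hz, hzm⟩ := (isCompact_closedBall (0 : E2) ρ).exists_isMaxOn ⟨y, hy⟩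
    (f := fun x => u x + ε * ‖x‖ ^ 2) ((hcont.mono hsub).add (by fun_prop))
  have hzy : u y + ε * ‖y‖ ^ 2 ≤ u z + ε * ‖z‖ ^ 2 := hzm hy
  have hzn : ‖z‖ ≤ ρ := by simpa using hz
  have hy0 : 0 ≤ ε * ‖y‖ ^ 2 := by positivity
  have hz2 : ε * ‖z‖ ^ 2 ≤ ε * ρ ^ 2 := by gcongr
  have hpos2 : 0 < ε * ρ ^ 2 := by positivity
  have hzlt : ‖z‖ < ρ := by
    refine lt_of_le_of_ne hzn fun h => ?_
    have := hs z (by simpa using h)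
    linarith
  have hzR := hsub hz
  have huz : 0 < u z := by linarith
  have hC := hsm z hzR huz
  have hlap := hharm z hzR huz
  have hlm : IsLocalMax (fun x => u x + ε * ‖x‖ ^ 2) z :=
    hzm.isLocalMax (closedBall_mem_nhds_of_mem (by simpa using hzlt))
  have hdiff : ∀ᶠ x in nhds z, DifferentiableAt ℝ u x := by
    filter_upwards [hC.eventually (by simp)] with x hx using hx.differentiableAt (by norm_num)
  have hD : DifferentiableAt ℝ (fderiv ℝ u) z :=
    (hC.fderiv_right (m := 1) (by norm_num)).differentiableAt (by norm_num)
  unfold lap at hlap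
  obtain ⟨i, hi⟩ : ∃ i : Fin 2, 0 ≤ fderiv ℝ (fun y => fderiv ℝ u y (EuclideanSpace.single i 1)) z
    (EuclideanSpace.single i 1) := by
    by_contra! hneg
    have := Finset.sum_neg (s := Finset.univ) (fun i _ => hneg i) ⟨(0 : Fin 2), by simp⟩
    linarith
  set a : E2 := EuclideanSpace.single i 1 with ha
  have hγ : ∀ t : ℝ, HasDerivAt (fun t : ℝ => z + t • a) a t := fun t => by
    simpa using ((hasDerivAt_id t).smul_const a).const_add z
  have hγc : Tendsto (fun t : ℝ => z + t • a) (nhds 0) (nhds z) := by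
    have := (hγ 0).continuousAt.tendsto
    simpa using this
  have hnorm : ∀ t : ℝ, ‖z + t • a‖ ^ 2 = ‖z‖ ^ 2 + 2 * (z i) * t + t ^ 2 := by
    intro t
    rw [norm_add_sq_real, inner_smul_right, norm_smul]
    simp [ha, EuclideanSpace.inner_single_right]
    ring
  refine not_max_1d (fun t => u (z + t • a) + ε * (‖z‖ ^ 2 + 2 * (z i) * t + t ^ 2))
    (fun t => fderiv ℝ u (z + t • a) a + ε * (2 * (z i) + 2 * t))
    (fderiv ℝ (fun y => fderiv ℝ u y a) z a + ε * 2) (by linarith) ?_ ?_ ?_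
  · filter_upwards [hγc.eventually hdiff] with t ht
    have h1 : HasDerivAt (fun t : ℝ => u (z + t • a)) (fderiv ℝ u (z + t • a) a) t :=
      ht.hasFDerivAt.comp_hasDerivAt t (hγ t)
    refine h1.add (HasDerivAt.const_mul ε ?_)
    have h2 := ((((hasDerivAt_id t).const_mul (2 * z i)).const_add (‖z‖ ^ 2))).add ((hasDerivAt_id t).pow 2)
    refine h2.congr_deriv ?_
    simp
  · have hDa : DifferentiableAt ℝ (fun y => fderiv ℝ u y a) (z + (0:ℝ) • a) := by
      rw [zero_smul, add_zero]
      exact hD.clm_apply (differentiableAt_const a)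
    have h1 : HasDerivAt (fun t : ℝ => fderiv ℝ u (z + t • a) a)
        (fderiv ℝ (fun y => fderiv ℝ u y a) (z + (0:ℝ) • a) a) 0 :=
      hDa.hasFDerivAt.comp_hasDerivAt (f := fun t : ℝ => z + t • a) 0 (hγ 0)
    rw [zero_smul, add_zero] at h1
    refine h1.add (HasDerivAt.const_mul ε ?_)
    have h2 := ((hasDerivAt_id (0:ℝ)).const_mul 2).const_add (2 * z i)
    refine h2.congr_deriv ?_
    simp
  · have : IsLocalMax (fun t : ℝ => u (z + t • a) + ε * ‖z + t • a‖ ^ 2) 0 := by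
      have h := hγc.eventually hlm
      unfold IsLocalMax IsMaxFilter
      filter_upwards [h] with t ht
      simpa using ht
    simpa only [hnorm] using this

lemma var_lemma (f f' h : ℝ → ℝ) (hd : ∀ t, HasDerivAt f (f' t) t) (hc' : Continuous f')
    (hc : Continuous h) (hp : Function.Periodic f (2 * Real.pi))
    (hph : Function.Periodic h (2 * Real.pi)) (hle : ∀ t, |f' t| ≤ h t) (a b : ℝ)
    (ha : f a = 0) (hb : f b = 1) : 2 ≤ ∫ t in (0:ℝ)..(2 * Real.pi), h t := by
  have hpi : 0 < 2 * Real.pi := by positivity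
  obtain ⟨c, hcm, hc1⟩ := hp.exists_mem_Ico hpi b a
  rw [hb] at hc1
  have h1 := hph.intervalIntegral_add_eq 0 a
  rw [zero_add] at h1
  rw [h1, ← intervalIntegral.integral_add_adjacent_intervals (hc.intervalIntegrable a c)
    (hc.intervalIntegrable c _)]
  have e1 := intervalIntegral.integral_eq_sub_of_hasDerivAt (a := a) (b := c)
      (fun t _ => hd t) (hc'.intervalIntegrable _ _)
  have e2 := intervalIntegral.integral_eq_sub_of_hasDerivAt (a := c) (b := a + 2 * Real.pi)
      (fun t _ => (hd t).neg) (hc'.neg.intervalIntegrable _ _)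
  have i1 : ∫ t in a..c, f' t ≤ ∫ t in a..c, h t :=
    intervalIntegral.integral_mono_on hcm.1 (hc'.intervalIntegrable _ _) (hc.intervalIntegrable _ _)
      fun t _ => (le_abs_self _).trans (hle t)
  have i2 : ∫ t in c..(a + 2 * Real.pi), - f' t ≤ ∫ t in c..(a + 2 * Real.pi), h t :=
    intervalIntegral.integral_mono_on hcm.2.le (hc'.neg.intervalIntegrable _ _) (hc.intervalIntegrable _ _)
      fun t _ => (neg_le_abs _).trans (hle t)
  have := hp a
  simp only [Pi.neg_apply] at e2
  linarith

lemma exists_polar (s : ℝ) (p : E2) (hp : p ∈ sphere (0 : E2) s) : ∃ t, p = s • ee t := by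
  have hn : ‖p‖ = s := by simpa using hp
  set z : ℂ := ⟨p 0, p 1⟩
  have hz : ‖z‖ = s := by
    rw [← hn, EuclideanSpace.norm_eq, Complex.norm_def, Complex.normSq_apply]
    simp [Fin.sum_univ_two, z, sq]
  refine ⟨z.arg, ?_⟩
  have h1 := Complex.norm_mul_cos_arg z
  have h2 := Complex.norm_mul_sin_arg z
  rw [hz] at h1 h2
  ext i
  fin_cases i
  · simp [ee, h1]; rfl
  · simp [ee, h2]; rfl

lemma lap_cont (w : E2 → ℝ) (hw : ContDiff ℝ 2 w) : Continuous (lap w) := by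
  have hw1 : ContDiff ℝ 1 (fderiv ℝ w) := hw.fderiv_right (m := 1) (by norm_num)
  have hc2 : Continuous (fderiv ℝ (fderiv ℝ w)) := hw1.continuous_fderiv (by norm_num)
  have : lap w = fun x => fderiv ℝ (fderiv ℝ w) x (ee 0) (ee 0) + fderiv ℝ (fderiv ℝ w) x (nn 0) (nn 0) := by
    ext x; exact lap_polar w hw x 0
  rw [this]; fun_prop

lemma core (w g : E2 → ℝ) (hw : ContDiff ℝ 2 w) (r M : ℝ) (hr : 0 < r)
    (hg : ∀ x ∈ closedBall (0 : E2) r, ContDiffAt ℝ 1 g x)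
    (hlap : ∀ x ∈ closedBall (0 : E2) r, ‖fderiv ℝ g x‖ ≤ 4 / 3 * lap w x)
    (h01 : ∀ s, r / 100 ≤ s → s ≤ r → (∃ p ∈ sphere (0 : E2) s, g p = 0) ∧
      (∃ q ∈ sphere (0 : E2) s, g q = 1))
    (hw0 : ∀ x ∈ closedBall (0 : E2) r, 0 ≤ w x)
    (hwM : ∀ x ∈ sphere (0 : E2) r, w x ≤ M) : r ≤ 2 * Real.pi * M := by
  have hpi : 0 ≤ 2 * Real.pi := by positivity
  have hecont := ee_cont
  have hncont := nn_cont
  have hlc := lap_cont w hw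
  have hmem : ∀ s t, 0 ≤ s → s ≤ r → s • ee t ∈ closedBall (0 : E2) r := by
    intro s t h0 h1
    simp [norm_smul, ee_norm, abs_of_nonneg h0, h1]
  set A : ℝ → ℝ := fun s => ∫ t in (0:ℝ)..(2 * Real.pi), w (s • ee t) with hA
  set B : ℝ → ℝ := fun s => ∫ t in (0:ℝ)..(2 * Real.pi), fderiv ℝ w (s • ee t) (ee t) with hB
  set L : ℝ → ℝ := fun s => s * ∫ t in (0:ℝ)..(2 * Real.pi), lap w (s • ee t) with hL
  have hAd : ∀ s, HasDerivAt A (B s) s := fun s => (polar w hw s).1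
  have hGd : ∀ s, 0 < s → HasDerivAt (fun s => s * B s) (L s) s := fun s => (polar w hw s).2
  have hGc : Continuous (fun s => s * B s) := by
    have : Continuous B := by
      have hc1 : Continuous (fderiv ℝ w) := hw.continuous_fderiv (by norm_num)
      apply intervalIntegral.continuous_parametric_intervalIntegral_of_continuous'
      fun_prop
    fun_prop
  have hL0 : ∀ s, 0 < s → s ≤ r → 0 ≤ L s := by
    intro s h0 h1
    refine mul_nonneg h0.le (intervalIntegral.integral_nonneg hpi fun t _ => ?_)
    have := (norm_nonneg _).trans (hlap _ (hmem s t h0.le h1))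
    linarith
  have hL1 : ∀ s, r / 100 ≤ s → s ≤ r → 3 / 2 ≤ L s := by
    intro s hs0 hs1
    have hs : 0 < s := by linarith
    obtain ⟨⟨p, hp, hgp⟩, ⟨q, hq, hgq⟩⟩ := h01 s hs0 hs1
    obtain ⟨a, rfl⟩ := exists_polar s p hp
    obtain ⟨b, rfl⟩ := exists_polar s q hq
    have := var_lemma (fun t => g (s • ee t)) (fun t => fderiv ℝ g (s • ee t) (s • nn t))
      (fun t => s * (4 / 3 * lap w (s • ee t))) ?_ ?_ (by fun_prop) ?_ ?_ ?_ a b hgp hgq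
    · rw [intervalIntegral.integral_const_mul, intervalIntegral.integral_const_mul] at this
      simp only [hL]
      linarith
    · intro t
      exact ((hg _ (hmem s t hs.le hs1)).differentiableAt (by norm_num)).hasFDerivAt.comp_hasDerivAt t
        ((ee_deriv t).const_smul s)
    · have : Continuous (fun t => fderiv ℝ g (s • ee t)) := by
        rw [continuous_iff_continuousAt]
        intro t
        have h1 : ContinuousAt (fderiv ℝ g) (s • ee t) :=
          ((hg _ (hmem s t hs.le hs1)).fderiv_right (m := 0) (by norm_num)).continuousAt
        exact ContinuousAt.comp (f := fun t => s • ee t) h1 (by fun_prop)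
      fun_prop
    · intro t; simp only [ee_periodic t]
    · intro t; simp only [ee_periodic t]
    · intro t
      have h1 := (fderiv ℝ g (s • ee t)).le_opNorm (s • nn t)
      rw [norm_smul, nn_norm, mul_one, Real.norm_eq_abs, Real.norm_eq_abs, abs_of_pos hs] at h1
      have h2 := hlap _ (hmem s t hs.le hs1)
      calc _ ≤ _ := h1
        _ ≤ (4 / 3 * lap w (s • ee t)) * s := by gcongr
        _ = _ := by ring
  have hG0 : 0 ≤ (r / 100) * B (r / 100) := by
    have := (convex_Icc 0 (r / 100)).mul_sub_le_image_sub_of_le_deriv (f := fun s => s * B s) (C := 0)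
      hGc.continuousOn ?_ ?_ 0 ⟨le_rfl, by positivity⟩ (r / 100) ⟨by positivity, le_rfl⟩ (by positivity)
    · simpa using this
    · rw [interior_Icc]
      exact fun x hx => (hGd x hx.1).differentiableAt.differentiableWithinAt
    · rw [interior_Icc]
      intro x hx
      rw [(hGd x hx.1).deriv]
      exact hL0 x hx.1 (by linarith [hx.2])
  have hG1 : ∀ s, r / 100 ≤ s → s ≤ r → 3 / 2 * (s - r / 100) ≤ s * B s := by
    intro s hs0 hs1
    have := (convex_Icc (r / 100) s).mul_sub_le_image_sub_of_le_deriv (f := fun s => s * B s) (C := 3 / 2)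
      hGc.continuousOn ?_ ?_ (r / 100) ⟨le_rfl, hs0⟩ s ⟨hs0, le_rfl⟩ hs0
    · linarith
    · rw [interior_Icc]
      exact fun x hx => (hGd x (by linarith [hx.1])).differentiableAt.differentiableWithinAt
    · rw [interior_Icc]
      intro x hx
      rw [(hGd x (by linarith [hx.1])).deriv]
      exact hL1 x hx.1.le (by linarith [hx.2])
  have hB1 : ∀ s, r / 10 ≤ s → s ≤ r → 27 / 20 ≤ B s := by
    intro s hs0 hs1
    have h1 := hG1 s (by linarith) hs1
    have hs : 0 < s := by linarith
    have : s * (27 / 20) ≤ s * B s := by linarith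
    exact le_of_mul_le_mul_left this hs
  have hA1 : 27 / 20 * (r - r / 10) ≤ A r - A (r / 10) := by
    refine (convex_Icc (r / 10) r).mul_sub_le_image_sub_of_le_deriv (f := A) (C := 27 / 20)
      (fun x _ => (hAd x).continuousAt.continuousWithinAt)
      (fun x _ => (hAd x).differentiableAt.differentiableWithinAt) ?_ (r / 10) ⟨le_rfl, by linarith⟩ r
      ⟨by linarith, le_rfl⟩ (by linarith)
    rw [interior_Icc]
    intro x hx
    rw [(hAd x).deriv]
    exact hB1 x hx.1.le hx.2.le
  have hA0 : 0 ≤ A (r / 10) :=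
    intervalIntegral.integral_nonneg hpi fun t _ => hw0 _ (hmem _ t (by linarith) (by linarith))
  have hAr : A r ≤ 2 * Real.pi * M := by
    have hwc := hw.continuous
    have : A r ≤ ∫ t in (0:ℝ)..(2 * Real.pi), M := by
      refine intervalIntegral.integral_mono_on hpi (Continuous.intervalIntegrable (by fun_prop) _ _)
        (by simp) fun t _ => hwM _ ?_
      simp [norm_smul, ee_norm, abs_of_pos hr]
    simpa using this
  linarith

lemma zeros (R : ℝ) (F : Set E2) (C : Set E2) (hC : IsClosed C) (hF : F = C ∩ ball (0 : E2) R)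
    (htopo : ∀ x ∈ F, ¬ IsCompact (connectedComponentIn F x)) (h0 : (0 : E2) ∈ F)
    (s : ℝ) (hs : 0 < s) (hsR : s < R) : ∃ p ∈ sphere (0 : E2) s, p ∈ F := by
  have hpre : IsPreconnected (connectedComponentIn F 0) := isPreconnected_connectedComponentIn
  have hm := mem_connectedComponentIn h0
  have hsubF := connectedComponentIn_subset F 0
  by_cases h : ∃ y ∈ connectedComponentIn F 0, s ≤ ‖y‖
  · obtain ⟨y, hy, hys⟩ := h
    obtain ⟨p, hp, hps⟩ := hpre.intermediate_value hm hy (f := fun x => ‖x‖) (by fun_prop)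
      (show s ∈ Set.Icc _ _ from ⟨by simpa using hs.le, hys⟩)
    exact ⟨p, by simpa using hps, hsubF hp⟩
  · push Not at h
    exfalso
    refine htopo 0 h0 ?_
    have hK : IsCompact (C ∩ closedBall (0 : E2) s) := (isCompact_closedBall _ _).inter_left hC
    have hcl : closure (connectedComponentIn F 0) ⊆ C ∩ closedBall (0 : E2) s := by
      refine closure_minimal (fun x hx => ⟨?_, ?_⟩) hK.isClosed
      · have := hsubF hx
        rw [hF] at this; exact this.1
      · simpa using (h x hx).le
    have hclF : closure (connectedComponentIn F 0) ⊆ F := by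
      intro x hx
      rw [hF]
      exact ⟨(hcl hx).1, closedBall_subset_ball hsR (hcl hx).2⟩
    have hle : closure (connectedComponentIn F 0) ⊆ connectedComponentIn F 0 :=
      hpre.closure.subset_connectedComponentIn (subset_closure hm) hclF
    rw [subset_closure.antisymm hle]
    exact hK.of_isClosed_subset isClosed_closure hcl

lemma exists_delta (R : ℝ) (u : E2 → ℝ)
    (hcont : ContinuousOn u (ball (0 : E2) R))
    (hnn : ∀ x, 0 ≤ u x) (N : E2 → ℝ)
    (pos F : Set E2)
    (hpos : pos = {x ∈ ball (0 : E2) R | 0 < u x})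
    (hF : F = frontier pos ∩ ball (0 : E2) R)
    (hfb : ∀ x₀ ∈ F, Tendsto N (nhdsWithin x₀ pos) (nhds 1))
    (r : ℝ) (hrR : r < R) :
    ∃ δ > 0, ∀ x ∈ closedBall (0 : E2) r, 0 < u x → u x ≤ δ → 3 / 4 ≤ N x := by
  refine (isCompact_closedBall (0 : E2) r).induction_on
    (p := fun S => ∃ δ > 0, ∀ x ∈ S, 0 < u x → u x ≤ δ → 3 / 4 ≤ N x) ?_ ?_ ?_ ?_
  · exact ⟨1, one_pos, by simp⟩
  · rintro s t hst ⟨δ, h, h'⟩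
    exact ⟨δ, h, fun x hx => h' x (hst hx)⟩
  · rintro s t ⟨δ, h, h'⟩ ⟨η, k, k'⟩
    refine ⟨min δ η, lt_min h k, ?_⟩
    rintro x (hx | hx) h1 h2
    · exact h' x hx h1 (h2.trans (min_le_left _ _))
    · exact k' x hx h1 (h2.trans (min_le_right _ _))
  · intro x hx
    have hxR : x ∈ ball (0 : E2) R := closedBall_subset_ball hrR hx
    have hca : ContinuousAt u x := hcont.continuousAt (isOpen_ball.mem_nhds hxR)
    have hball : ball (0 : E2) R ∈ nhds x := isOpen_ball.mem_nhds hxR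
    rcases (hnn x).lt_or_eq with h | h
    · refine ⟨{y | u x / 2 < u y}, mem_nhdsWithin_of_mem_nhds (hca.eventually (lt_mem_nhds (by linarith))), u x / 2, by positivity, ?_⟩
      intro y hy _ h2
      exact absurd hy (not_lt.2 h2)
    · by_cases hcl : x ∈ closure pos
      · have hxF : x ∈ F := by
          rw [hF]
          refine ⟨⟨hcl, fun hi => ?_⟩, hxR⟩
          have := interior_subset hi
          rw [hpos] at this
          exact absurd this.2 (by rw [← h]; simp)
        have h1 := (hfb x hxF).eventually (lt_mem_nhds (show (3 / 4 : ℝ) < 1 by norm_num))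
        rw [eventually_nhdsWithin_iff] at h1
        refine ⟨_, mem_nhdsWithin_of_mem_nhds (h1.and hball), 1, one_pos, ?_⟩
        rintro y ⟨hy, hyR⟩ h2 _
        exact (hy (by rw [hpos]; exact ⟨hyR, h2⟩)).le
      · refine ⟨_, mem_nhdsWithin_of_mem_nhds (inter_mem (isClosed_closure.isOpen_compl.mem_nhds hcl) hball), 1, one_pos, ?_⟩
        rintro y ⟨hy, hyR⟩ h2 _
        exact absurd (subset_closure (by rw [hpos]; exact ⟨hyR, h2⟩)) hy

lemma exists_beta (δ : ℝ) (hδ : 0 < δ) : ∃ β b : ℝ → ℝ, ContDiff ℝ 2 β ∧ ContDiff ℝ 1 b ∧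
    (∀ t, HasDerivAt β (b t) t) ∧ (∀ t, t ≤ δ / 2 → b t = 0) ∧ (∀ t, t ≤ δ / 2 → β t = 0) ∧
    (∀ t, δ ≤ t → b t = 1) ∧ (∀ t, 0 ≤ deriv b t) ∧ (∀ t, δ < t → deriv b t = 0) ∧
    (∀ t, 0 ≤ t → 0 ≤ β t ∧ β t ≤ t) := by
  set b : ℝ → ℝ := fun t => Real.smoothTransition (2 * t / δ - 1) with hb
  have hb1 : ContDiff ℝ 1 b :=
    (Real.smoothTransition.contDiff (n := 1)).comp (by fun_prop)
  set β : ℝ → ℝ := fun t => ∫ x in (δ / 2)..t, b x with hβ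
  have hβd : ∀ t, HasDerivAt β (b t) t := fun t =>
    intervalIntegral.integral_hasDerivAt_right (hb1.continuous.intervalIntegrable _ _)
      hb1.continuous.stronglyMeasurable.stronglyMeasurableAtFilter hb1.continuous.continuousAt
  have hbz : ∀ t, t ≤ δ / 2 → b t = 0 := by
    intro t ht
    apply Real.smoothTransition.zero_of_nonpos
    have : 2 * t / δ ≤ 1 := by rw [div_le_one hδ]; linarith
    linarith
  have hbo : ∀ t, δ ≤ t → b t = 1 := by
    intro t ht
    apply Real.smoothTransition.one_of_one_le
    have : 2 ≤ 2 * t / δ := by rw [le_div_iff₀ hδ]; linarith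
    linarith
  have hβz : ∀ t, t ≤ δ / 2 → β t = 0 := by
    intro t ht
    have : β t = ∫ x in (δ / 2)..t, (0 : ℝ) := by
      refine intervalIntegral.integral_congr fun x hx => ?_
      rw [Set.uIcc_of_ge ht] at hx
      exact hbz x hx.2
    simpa using this
  refine ⟨β, b, ?_, hb1, hβd, hbz, hβz, hbo, ?_, ?_, ?_⟩
  · have h : deriv β = b := funext fun t => (hβd t).deriv
    rw [show (2 : WithTop ℕ∞) = 1 + 1 by norm_num, contDiff_succ_iff_deriv]
    refine ⟨fun t => (hβd t).differentiableAt, by simp, by rwa [h]⟩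
  · have hm : Monotone b := by
      intro x y hxy
      apply Real.smoothTransition.monotone
      gcongr
    intro t; exact hm.deriv_nonneg
  · intro t ht
    have : b =ᶠ[nhds t] fun _ => 1 := by
      filter_upwards [lt_mem_nhds ht] with x hx using hbo x hx.le
    rw [this.deriv_eq]; simp
  · intro t ht
    rcases le_total t (δ / 2) with h | h
    · rw [hβz t h]; exact ⟨le_rfl, ht⟩
    · constructor
      · exact intervalIntegral.integral_nonneg h fun x _ => Real.smoothTransition.nonneg _
      · have : β t ≤ ∫ x in (δ / 2)..t, (1:ℝ) :=
          intervalIntegral.integral_mono_on h (hb1.continuous.intervalIntegrable _ _) (by simp)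
            fun x _ => Real.smoothTransition.le_one _
        simp at this
        linarith

lemma lap_congr {v w : E2 → ℝ} {x : E2} (h : v =ᶠ[nhds x] w) : lap v x = lap w x := by
  unfold lap
  refine Finset.sum_congr rfl fun i _ => ?_
  have : (fun y => fderiv ℝ v y (EuclideanSpace.single i 1)) =ᶠ[nhds x]
      (fun y => fderiv ℝ w y (EuclideanSpace.single i 1)) := by
    filter_upwards [h.fderiv (𝕜 := ℝ)] with y hy
    rw [hy]
  rw [this.fderiv_eq]

lemma lap_comp (u : E2 → ℝ) (x : E2) (hC : ContDiffAt ℝ 2 u x) (β b : ℝ → ℝ)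
    (hβ : ∀ t, HasDerivAt β (b t) t) (hb : ContDiff ℝ 1 b) :
    lap (fun y => β (u y)) x = deriv b (u x) * ‖gradient u x‖ ^ 2 + b (u x) * lap u x := by
  have hdiff : ∀ᶠ x in nhds x, DifferentiableAt ℝ u x := by
    filter_upwards [hC.eventually (by simp)] with x hx using hx.differentiableAt (by norm_num)
  have hD : DifferentiableAt ℝ (fderiv ℝ u) x :=
    (hC.fderiv_right (m := 1) (by norm_num)).differentiableAt (by norm_num)
  rw [grad_norm_sq]
  unfold lap
  rw [Finset.mul_sum, Finset.mul_sum, ← Finset.sum_add_distrib]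
  refine Finset.sum_congr rfl fun i _ => ?_
  set a : E2 := EuclideanSpace.single i 1
  have h1 : (fun y => fderiv ℝ (fun y => β (u y)) y a) =ᶠ[nhds x] fun y => b (u y) * fderiv ℝ u y a := by
    filter_upwards [hdiff] with y hy
    have : HasFDerivAt (fun y => β (u y)) (b (u y) • fderiv ℝ u y) y :=
      (hβ (u y)).comp_hasFDerivAt y hy.hasFDerivAt
    rw [this.fderiv]; simp
  have h2 : HasFDerivAt (fun y => b (u y)) (deriv b (u x) • fderiv ℝ u x) x :=
    ((hb.differentiable (by norm_num)) (u x)).hasDerivAt.comp_hasFDerivAt x hdiff.self_of_nhds.hasFDerivAt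
  have h3 : DifferentiableAt ℝ (fun y => fderiv ℝ u y a) x := hD.clm_apply (differentiableAt_const a)
  have h4 : fderiv ℝ (fun y => b (u y) * fderiv ℝ u y a) x = _ := (h2.mul h3.hasFDerivAt).fderiv
  rw [h1.fderiv_eq, h4]
  simp
  ring

lemma lower (R : ℝ)
    (u : E2 → ℝ)
    (hcont : ContinuousOn u (ball (0 : E2) R))
    (hnn : ∀ x, 0 ≤ u x)
    (pos F : Set E2)
    (hpos : pos = {x ∈ ball (0 : E2) R | 0 < u x})
    (hF : F = frontier pos ∩ ball (0 : E2) R)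
    (hsm : ∀ x ∈ ball (0 : E2) R, 0 < u x → ContDiffAt ℝ 2 u x)
    (hharm : ∀ x ∈ ball (0 : E2) R, 0 < u x → lap u x = 0)
    (hopen : IsOpen pos)
    (hfb : ∀ x₀ ∈ F, Tendsto (fun x => ‖gradient u x‖) (nhdsWithin x₀ pos) (nhds 1))
    (htopo : ∀ x ∈ F, ¬ IsCompact (connectedComponentIn F x))
    (h0 : (0 : E2) ∈ F) (r M : ℝ) (hr : 0 < r) (hrR : r < R)
    (hM : ∀ x ∈ sphere (0 : E2) r, u x ≤ M) : r ≤ 2 * Real.pi * M := by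
  have hF0 : ∀ p ∈ F, u p = 0 := by
    intro p hp
    by_contra hne
    rw [hF] at hp
    have : p ∈ pos := by rw [hpos]; exact ⟨hp.2, lt_of_le_of_ne (hnn p) (Ne.symm hne)⟩
    exact hp.1.2 (hopen.interior_eq.symm ▸ this)
  obtain ⟨δ₁, hδ₁, hδ₁N⟩ := exists_delta R u hcont hnn (fun x => ‖gradient u x‖) pos F hpos hF hfb r hrR
  -- a positive value near the origin
  have hq : ∃ q ∈ closedBall (0 : E2) (r / 100), 0 < u q := by
    have h0c : (0 : E2) ∈ closure pos := by rw [hF] at h0; exact h0.1.1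
    obtain ⟨q, hq, hqp⟩ := mem_closure_iff_nhds.1 h0c (closedBall (0 : E2) (r / 100))
      (closedBall_mem_nhds _ (by positivity))
    rw [hpos] at hqp
    exact ⟨q, hq, hqp.2⟩
  obtain ⟨q, hqb, hqp⟩ := hq
  set δ := min δ₁ (u q / 2) with hδd
  have hδ : 0 < δ := lt_min hδ₁ (by positivity)
  have hδq : δ < u q := lt_of_le_of_lt (min_le_right _ _) (by linarith)
  obtain ⟨β, b, hβ2, hb1, hβd, hbz, hβz, hbo, hb', hb'z, hββ⟩ := exists_beta δ hδ
  let χ : ContDiffBump (0 : E2) := ⟨(2 * r + R) / 3, (r + 2 * R) / 3, by linarith, by linarith⟩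
  have hsub : closedBall (0 : E2) r ⊆ ball 0 R := closedBall_subset_ball hrR
  -- facts on the small set
  have hzero : ∀ x ∈ ball (0 : E2) R, u x = 0 → ∀ᶠ y in nhds x, u y ≤ δ / 2 := by
    intro x hx h
    have hca : ContinuousAt u x := hcont.continuousAt (isOpen_ball.mem_nhds hx)
    filter_upwards [hca.eventually (gt_mem_nhds (show u x < δ / 2 by rw [h]; positivity))] with y hy using hy.le
  have hv2 : ∀ x ∈ ball (0 : E2) R, ContDiffAt ℝ 2 (fun y => β (u y)) x := by
    intro x hx
    rcases (hnn x).lt_or_eq with h | h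
    · exact hβ2.contDiffAt.comp x (hsm x hx h)
    · have : (fun y => β (u y)) =ᶠ[nhds x] fun _ => 0 := by
        filter_upwards [hzero x hx h.symm] with y hy using hβz _ hy
      exact contDiffAt_const.congr_of_eventuallyEq this
  have hw : ContDiff ℝ 2 (fun y => χ y * β (u y)) := by
    rw [contDiff_iff_contDiffAt]
    intro x
    by_cases hx : x ∈ ball (0 : E2) R
    · exact χ.contDiff.contDiffAt.mul (hv2 x hx)
    · have hx' : x ∉ tsupport χ := by
        rw [χ.tsupport_eq]
        intro h
        exact hx (closedBall_subset_ball (show (r + 2 * R) / 3 < R by linarith) h)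
      have : (fun y => χ y * β (u y)) =ᶠ[nhds x] fun _ => 0 := by
        filter_upwards [notMem_tsupport_iff_eventuallyEq.1 hx'] with y hy
        rw [hy]; simp
      exact contDiffAt_const.congr_of_eventuallyEq this
  have hwv : ∀ x ∈ closedBall (0 : E2) r, (fun y => χ y * β (u y)) =ᶠ[nhds x] fun y => β (u y) := by
    intro x hx
    have : x ∈ ball (0 : E2) ((2 * r + R) / 3) := closedBall_subset_ball (by linarith) hx
    filter_upwards [χ.eventuallyEq_one_of_mem_ball this] with y hy
    rw [hy]; simp
  have hwv' : ∀ x ∈ closedBall (0 : E2) r, χ x * β (u x) = β (u x) := fun x hx =>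
    (hwv x hx).self_of_nhds
  refine core (fun y => χ y * β (u y)) (fun y => b (u y)) hw r M hr ?_ ?_ ?_ ?_ ?_
  · intro x hx
    rcases (hnn x).lt_or_eq with h | h
    · exact hb1.contDiffAt.comp x ((hsm x (hsub hx) h).of_le (by norm_num))
    · have : (fun y => b (u y)) =ᶠ[nhds x] fun _ => 0 := by
        filter_upwards [hzero x (hsub hx) h.symm] with y hy using hbz _ hy
      exact contDiffAt_const.congr_of_eventuallyEq this
  · intro x hx
    rw [lap_congr (hwv x hx)]
    rcases (hnn x).lt_or_eq with h | h
    · have hC := hsm x (hsub hx) h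
      rw [lap_comp u x hC β b hβd hb1, hharm x (hsub hx) h]
      have h2 : HasFDerivAt (fun y => b (u y)) (deriv b (u x) • fderiv ℝ u x) x :=
        ((hb1.differentiable (by norm_num)) (u x)).hasDerivAt.comp_hasFDerivAt x
          (hC.differentiableAt (by norm_num)).hasFDerivAt
      rw [h2.fderiv, norm_smul, ← norm_grad, Real.norm_eq_abs, abs_of_nonneg (hb' _)]
      rcases le_or_gt (u x) δ with hle | hgt
      · have hN : 3 / 4 ≤ ‖gradient u x‖ := hδ₁N x hx h (hle.trans (min_le_left _ _))
        have : ‖gradient u x‖ ≤ 4 / 3 * ‖gradient u x‖ ^ 2 := by nlinarith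
        have := mul_le_mul_of_nonneg_left this (hb' (u x))
        linarith
      · rw [hb'z _ hgt]; simp
    · have e1 : (fun y => b (u y)) =ᶠ[nhds x] fun _ => 0 := by
        filter_upwards [hzero x (hsub hx) h.symm] with y hy using hbz _ hy
      have e2 : (fun y => β (u y)) =ᶠ[nhds x] fun _ => 0 := by
        filter_upwards [hzero x (hsub hx) h.symm] with y hy using hβz _ hy
      rw [lap_congr e2, e1.fderiv_eq]
      simp [lap]
  · intro s hs0 hs1
    have hs : 0 < s := by linarith
    constructor
    · obtain ⟨p, hp, hpF⟩ := zeros R F (frontier pos) isClosed_frontier hF htopo h0 s hs (by linarith)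
      exact ⟨p, hp, by rw [hF0 p hpF]; exact hbz 0 (by positivity)⟩
    · by_contra! hcon
      have hlt : ∀ x ∈ sphere (0 : E2) s, u x ≤ δ := by
        intro x hx
        by_contra! hgt
        exact hcon x hx (hbo _ hgt.le)
      have := max_princ R u hcont hsm hharm s δ hs (by linarith) hδ.le hlt q
        (closedBall_subset_closedBall hs0 hqb)
      linarith
  · intro x hx
    simp only [hwv' x hx]
    exact (hββ _ (hnn x)).1
  · intro x hx
    simp only [hwv' x (sphere_subset_closedBall hx)]
    exact (hββ _ (hnn x)).2.trans (hM x hx)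

end ND

/-- Non-degeneracy of classical solutions: if `u` is a classical solution of
the one-phase free boundary problem in `B_R(0) ⊂ ℝ²` whose free boundary has no connected
component that is compact in the open disk, and `0 ∈ F(u)`, then for all `0 < r < R`,
`sup_{B_r} u = max_{∂B_r} u ≥ r/(2π)`. -/
theorem nondegeneracy
    (R : ℝ) (hR : 0 < R)
    (u : EuclideanSpace ℝ (Fin 2) → ℝ)
    (hcont : ContinuousOn u (ball (0 : EuclideanSpace ℝ (Fin 2)) R))
    (hnn : ∀ x, 0 ≤ u x)
    (pos F : Set (EuclideanSpace ℝ (Fin 2)))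
    (hpos : pos = {x ∈ ball (0 : EuclideanSpace ℝ (Fin 2)) R | 0 < u x})
    (hF : F = frontier pos ∩ ball (0 : EuclideanSpace ℝ (Fin 2)) R)
    (hsm : ContDiffOn ℝ 2 u pos)
    (hharm : ∀ x ∈ pos, lap u x = 0)
    (hfb : ∀ x₀ ∈ F, Tendsto (fun x => ‖gradient u x‖) (nhdsWithin x₀ pos) (nhds 1))
    -- topological assumption: no connected component of the free boundary is compact
    (htopo : ∀ x ∈ F, ¬ IsCompact (connectedComponentIn F x))
    (h0 : (0 : EuclideanSpace ℝ (Fin 2)) ∈ F) :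
    ∀ r : ℝ, 0 < r → r < R →
      (∀ y ∈ ball (0 : EuclideanSpace ℝ (Fin 2)) r,
        u y ≤ sSup (u '' sphere (0 : EuclideanSpace ℝ (Fin 2)) r)) ∧
      r / (2 * Real.pi) ≤ sSup (u '' sphere (0 : EuclideanSpace ℝ (Fin 2)) r) := by
  have hca : ∀ x ∈ ball (0 : EuclideanSpace ℝ (Fin 2)) R, ContinuousAt u x := fun x hx =>
    hcont.continuousAt (isOpen_ball.mem_nhds hx)
  have hopen : IsOpen pos := by
    rw [hpos, isOpen_iff_mem_nhds]
    rintro x ⟨hx, hux⟩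
    filter_upwards [isOpen_ball.mem_nhds hx, (hca x hx).eventually (lt_mem_nhds hux)] with y h1 h2
    exact ⟨h1, h2⟩
  have hmem : ∀ x ∈ ball (0 : EuclideanSpace ℝ (Fin 2)) R, 0 < u x → x ∈ pos := by
    intro x hx h
    rw [hpos]; exact ⟨hx, h⟩
  have hsm' : ∀ x ∈ ball (0 : EuclideanSpace ℝ (Fin 2)) R, 0 < u x → ContDiffAt ℝ 2 u x :=
    fun x hx h => hsm.contDiffAt (hopen.mem_nhds (hmem x hx h))
  have hharm' : ∀ x ∈ ball (0 : EuclideanSpace ℝ (Fin 2)) R, 0 < u x → lap u x = 0 :=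
    fun x hx h => hharm x (hmem x hx h)
  intro r hr hrR
  have hbdd : BddAbove (u '' sphere (0 : EuclideanSpace ℝ (Fin 2)) r) := by
    refine ((isCompact_sphere _ r).image_of_continuousOn (hcont.mono ?_)).bddAbove
    exact sphere_subset_closedBall.trans (closedBall_subset_ball hrR)
  have hle : ∀ x ∈ sphere (0 : EuclideanSpace ℝ (Fin 2)) r,
      u x ≤ sSup (u '' sphere (0 : EuclideanSpace ℝ (Fin 2)) r) :=
    fun x hx => le_csSup hbdd ⟨x, hx, rfl⟩
  have hM0 : 0 ≤ sSup (u '' sphere (0 : EuclideanSpace ℝ (Fin 2)) r) := by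
    apply Real.sSup_nonneg
    rintro _ ⟨x, _, rfl⟩
    exact hnn x
  refine ⟨fun y hy => ND.max_princ R u hcont hsm' hharm' r _ hr hrR hM0 hle y
    (ball_subset_closedBall hy), ?_⟩
  have := ND.lower R u hcont hnn pos F hpos hF hsm' hharm' hopen hfb htopo h0 r _ hr hrR hle
  rw [div_le_iff₀ (by positivity)]
  linarith
end

section
/- Gradient improvement near a wedge: there is a universal constant c > 0 such that if u is a classical solution of the one-phase free boundary problem in B₂ ⊂ ℝ² with Lipschitz norm L and |u(x) − s|x₂|| < ε in B₂ for some 0 < s ≤ 1 and small ε > 0, then ‖∇u‖_{L^∞(B_{1/2})} ≤ 1 + c L √ε. -/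
open Filter Metric

namespace GI
open Topology InnerProductSpace Complex

noncomputable def cg (U : ℂ → ℝ) (z : ℂ) : ℂ := fderiv ℝ U z 1 - I * fderiv ℝ U z I

lemma second_test (g g' : ℝ → ℝ) (c : ℝ) (hmax : IsLocalMax g 0)
    (h1 : ∀ᶠ t in 𝓝 (0:ℝ), HasDerivAt g (g' t) t) (h2 : HasDerivAt g' c 0) : c ≤ 0 := by
  by_contra hc
  push Not at hc
  have hd : deriv g =ᶠ[𝓝 0] g' := h1.mono fun t ht => ht.deriv
  have hdd : deriv (deriv g) 0 = c := by rw [hd.deriv_eq]; exact h2.deriv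
  have hmin := isLocalMin_of_deriv_deriv_pos (f := g) (x₀ := 0) (by rw [hdd]; exact hc)
    hmax.deriv_eq_zero h1.self_of_nhds.continuousAt
  have hconst : g =ᶠ[𝓝 0] fun _ => g 0 := by
    filter_upwards [hmax, hmin] with t a b using le_antisymm a b
  have : deriv (deriv g) 0 = 0 := by
    have h3 : deriv g =ᶠ[𝓝 0] deriv (fun _ => g 0) := hconst.deriv
    rw [h3.deriv_eq]; simp
  linarith

lemma line_deriv (F : ℂ → ℝ) (p e : ℂ) (hF : ContDiffAt ℝ 2 F p) :
    (∀ᶠ t : ℝ in 𝓝 (0:ℝ), HasDerivAt (fun t : ℝ => F (p + t * e)) (fderiv ℝ F (p + t * e) e) t) ∧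
    HasDerivAt (fun t : ℝ => fderiv ℝ F (p + t * e) e) (iteratedFDeriv ℝ 2 F p ![e, e]) 0 := by
  have hl : ∀ t : ℝ, HasDerivAt (fun t : ℝ => p + t * e) e t := by
    intro t
    have := ((Complex.ofRealCLM.hasDerivAt (x := t)).mul_const e).const_add p
    simpa using this
  constructor
  · have h1 : ∀ᶠ z in 𝓝 p, ContDiffAt ℝ 2 F z := hF.eventually (by simp)
    have h2 : Tendsto (fun t : ℝ => p + t * e) (𝓝 0) (𝓝 p) := by
      have := (hl 0).continuousAt.tendsto
      simpa using this
    filter_upwards [h2.eventually h1] with t ht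
    exact (ht.differentiableAt two_ne_zero).hasFDerivAt.comp_hasDerivAt t (hl t)
  · have h1 : DifferentiableAt ℝ (fderiv ℝ F) (p + ((0:ℝ):ℂ) * e) := by
      have : ContDiffAt ℝ 1 (fderiv ℝ F) p := hF.fderiv_right (by norm_num)
      simpa using this.differentiableAt one_ne_zero
    have h2 := h1.hasFDerivAt.comp_hasDerivAt (0:ℝ) (hl 0)
    have h3 := h2.clm_apply (hasDerivAt_const (0:ℝ) e)
    simpa [iteratedFDeriv_two_apply] using h3

lemma cg_normSq (U : ℂ → ℝ) (z : ℂ) :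
    ‖cg U z‖ ^ 2 = (fderiv ℝ U z 1) ^ 2 + (fderiv ℝ U z I) ^ 2 := by
  rw [← Complex.normSq_eq_norm_sq, Complex.normSq_apply]
  simp [cg]; ring

lemma sq_line (x0 p e : ℂ) : (∀ t : ℝ, HasDerivAt (fun t : ℝ => ‖p + t * e - x0‖ ^ 2)
      (2 * ((p + t * e - x0).re * e.re + (p + t * e - x0).im * e.im)) t) ∧
    HasDerivAt (fun t : ℝ => 2 * ((p + t * e - x0).re * e.re + (p + t * e - x0).im * e.im))
      (2 * ‖e‖ ^ 2) 0 := by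
  have h (e : ℂ) : ‖e‖ ^ 2 = e.re ^ 2 + e.im ^ 2 := by
    rw [← Complex.normSq_eq_norm_sq, Complex.normSq_apply]; ring
  have hr : ∀ t : ℝ, HasDerivAt (fun t : ℝ => (p + t * e - x0).re) e.re t := by
    intro t
    have := (((hasDerivAt_id t).mul_const e.re).const_add p.re).sub_const x0.re
    simpa using this
  have hi : ∀ t : ℝ, HasDerivAt (fun t : ℝ => (p + t * e - x0).im) e.im t := by
    intro t
    have := (((hasDerivAt_id t).mul_const e.im).const_add p.im).sub_const x0.im
    simpa using this
  constructor
  · intro t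
    simp only [h]
    refine (((hr t).pow 2).add ((hi t).pow 2)).congr_deriv ?_
    simp; ring
  · rw [h]
    refine ((((hr 0).mul_const e.re).add ((hi 0).mul_const e.im)).const_mul 2).congr_deriv ?_
    ring

lemma harm_sum {F : ℂ → ℝ} {p : ℂ} (h : HarmonicAt F p) :
    iteratedFDeriv ℝ 2 F p ![1, 1] + iteratedFDeriv ℝ 2 F p ![I, I] = 0 := by
  have := h.2.eq_of_nhds
  rw [laplacian_eq_iteratedFDeriv_complexPlane] at this
  simpa using this

lemma no_local_max (U : ℂ → ℝ) (p x0 : ℂ) (K : ℝ) (hK : 0 < K) (hU : HarmonicAt U p)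
    (hp : 1 < ‖cg U p‖) :
    ¬ IsLocalMax (fun z => Real.log ‖cg U z‖ + 2 * K * U z ^ 2 - K * ‖z - x0‖ ^ 2) p := by
  intro hmax
  have hlog : HarmonicAt (fun z => Real.log ‖cg U z‖) p := by
    apply AnalyticAt.harmonicAt_log_norm (HarmonicAt.analyticAt_complex_partial hU)
    intro h0
    have : cg U p = 0 := h0
    rw [this] at hp; norm_num at hp
  have key : ∀ e : ℂ, iteratedFDeriv ℝ 2 (fun z => Real.log ‖cg U z‖) p ![e, e]
      + 2 * K * (2 * (fderiv ℝ U p e) ^ 2 + 2 * U p * iteratedFDeriv ℝ 2 U p ![e, e])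
      - K * (2 * ‖e‖ ^ 2) ≤ 0 := by
    intro e
    obtain ⟨a1, a2⟩ := line_deriv _ p e hlog.1
    obtain ⟨b1, b2⟩ := line_deriv _ p e hU.1
    obtain ⟨c1, c2⟩ := sq_line x0 p e
    refine second_test (fun t : ℝ => Real.log ‖cg U (p + t * e)‖ + 2 * K * U (p + t * e) ^ 2
      - K * ‖p + t * e - x0‖ ^ 2) (fun t : ℝ => fderiv ℝ (fun z => Real.log ‖cg U z‖) (p + t * e) e
      + 2 * K * (2 * (U (p + t * e) * fderiv ℝ U (p + t * e) e))
      - K * (2 * ((p + t * e - x0).re * e.re + (p + t * e - x0).im * e.im))) _ ?_ ?_ ?_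
    · have h2 : Tendsto (fun t : ℝ => p + t * e) (𝓝 0) (𝓝 p) := by
        have : Continuous (fun t : ℝ => p + t * e) := by fun_prop
        simpa using this.tendsto 0
      have := h2.eventually hmax
      filter_upwards [this] with t ht
      simpa using ht
    · filter_upwards [a1, b1] with t at1 bt1
      refine ((at1.add ((bt1.pow 2).const_mul (2 * K))).sub ((c1 t).const_mul K)).congr_deriv ?_
      simp; left; ring
    · refine ((a2.add (((b1.self_of_nhds.mul b2).const_mul 2).const_mul (2 * K))).sub
        (c2.const_mul K)).congr_deriv ?_
      simp; left; ring
  have k1 := key 1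
  have k2 := key I
  have s1 := harm_sum hlog
  have s2 := harm_sum hU
  have s3 := cg_normSq U p
  have e1 : 2 * K * (2 * U p * (iteratedFDeriv ℝ 2 U p ![1, 1] + iteratedFDeriv ℝ 2 U p ![I, I]))
    = 0 := by rw [s2]; ring
  have e2 : 4 * K * ‖cg U p‖ ^ 2 = 4 * K * ((fderiv ℝ U p 1) ^ 2 + (fderiv ℝ U p I) ^ 2) := by
    rw [s3]
  have e3 : 4 * K * 1 < 4 * K * ‖cg U p‖ ^ 2 := by
    apply mul_lt_mul_of_pos_left _ (by linarith)
    nlinarith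
  simp only [norm_one, Complex.norm_I] at k1 k2
  nlinarith

lemma grad_est (W : ℂ → ℝ) (p : ℂ) (d ε : ℝ) (hd : 0 < d) (hε : 0 < ε)
    (hW : ∀ z ∈ ball p d, HarmonicAt W z) (hb : ∀ z ∈ ball p d, |W z| ≤ ε) :
    ‖cg W p‖ ≤ 12 * (ε / d) := by
  obtain ⟨H, hH, hre⟩ := InnerProductSpace.HarmonicOnNhd.exists_analyticOnNhd_ball_re_eq
    (f := W) (z := p) (R := d) hW
  have hp : p ∈ ball p d := mem_ball_self hd
  have hder : HasDerivAt H (deriv H p) p := (hH p hp).differentiableAt.hasDerivAt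
  have hcg : cg W p = deriv H p := by
    have h1 : HasFDerivAt W (Complex.reCLM.comp
        ((ContinuousLinearMap.toSpanSingleton ℂ (deriv H p)).restrictScalars ℝ)) p := by
      have h2 := Complex.reCLM.hasFDerivAt.comp p (hder.hasFDerivAt.restrictScalars ℝ)
      refine h2.congr_of_eventuallyEq ?_
      filter_upwards [isOpen_ball.mem_nhds hp] with z hz using (hre hz).symm
    unfold cg
    rw [h1.fderiv]
    apply Complex.ext <;> simp
  have hG : DiffContOnCl ℂ (fun z => Complex.exp ((1 / (2 * ε) : ℝ) * H z)) (ball p (d / 2)) := by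
    apply DifferentiableOn.diffContOnCl
    intro z hz
    have hz' : z ∈ ball p d := by
      have := closure_ball_subset_closedBall hz
      rw [mem_closedBall] at this; rw [mem_ball]; linarith
    exact (((hH z hz').differentiableAt.const_mul _).cexp).differentiableWithinAt
  have hest := Complex.norm_deriv_le_of_forall_mem_sphere_norm_le (c := p) (R := d / 2)
    (C := Real.exp (1 / 2)) (by linarith) hG (by
      intro z hz
      have hz' : z ∈ ball p d := by
        rw [mem_sphere] at hz; rw [mem_ball]; linarith
      rw [Complex.norm_exp]
      apply Real.exp_le_exp.2
      rw [Complex.re_ofReal_mul]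
      have h1 : (H z).re = W z := hre hz'
      rw [h1]
      have := (abs_le.1 (hb z hz')).2
      calc 1 / (2 * ε) * W z ≤ 1 / (2 * ε) * ε := by gcongr
        _ = 1 / 2 := by field_simp)
  have hd2 : deriv (fun z => Complex.exp ((1 / (2 * ε) : ℝ) * H z)) p =
      Complex.exp ((1 / (2 * ε) : ℝ) * H p) * ((1 / (2 * ε) : ℝ) * deriv H p) :=
    ((hder.const_mul _).cexp).deriv
  rw [hd2, norm_mul, norm_mul, Complex.norm_exp, Complex.re_ofReal_mul] at hest
  have h1 : (H p).re = W p := hre hp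
  rw [h1, Complex.norm_real, Real.norm_of_nonneg (by positivity)] at hest
  have h2 : Real.exp (-(1/2)) ≤ Real.exp (1 / (2 * ε) * W p) := by
    apply Real.exp_le_exp.2
    have := (abs_le.1 (hb p hp)).1
    calc -(1/2) = 1 / (2 * ε) * (-ε) := by field_simp
      _ ≤ 1 / (2 * ε) * W p := by gcongr
  have h3 : Real.exp (-(1/2)) * (1 / (2 * ε) * ‖deriv H p‖) ≤ Real.exp (1 / 2) / (d / 2) :=
    le_trans (mul_le_mul_of_nonneg_right h2 (by positivity)) hest
  have h4 : 1 / (2 * ε) * ‖deriv H p‖ ≤ Real.exp 1 / (d / 2) := by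
    have := mul_le_mul_of_nonneg_left h3 (Real.exp_pos (1/2)).le
    rw [← mul_assoc, ← Real.exp_add, mul_div_assoc', ← Real.exp_add] at this
    norm_num at this
    norm_num; exact this
  rw [hcg]
  have h5 : ‖deriv H p‖ = 2 * ε * (1 / (2 * ε) * ‖deriv H p‖) := by field_simp
  rw [h5]
  calc _ ≤ 2 * ε * (Real.exp 1 / (d / 2)) := by gcongr
    _ = 4 * Real.exp 1 * (ε / d) := by field_simp; norm_num
    _ ≤ 12 * (ε / d) := by
      have := Real.exp_one_lt_d9
      gcongr; linarith

lemma cg_cont {U : ℂ → ℝ} {z : ℂ} (h : HarmonicAt U z) : ContinuousAt (fun z => ‖cg U z‖) z :=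
  (HarmonicAt.analyticAt_complex_partial h).continuousAt.norm

lemma far_est (U : ℂ → ℝ) (s ε : ℝ) (hs : 0 < s) (hs1 : s ≤ 1) (hε : 0 < ε) (hε1 : 18 * ε ≤ 1)
    (hH : ∀ z ∈ ball (0:ℂ) 2, 0 < U z → HarmonicAt U z)
    (hc : ∀ z ∈ ball (0:ℂ) 2, abs (U z - s * abs z.im) < ε)
    (p : ℂ) (hp : ‖p‖ < 3 / 2) (him : √ε + ε / s ≤ |p.im|) :
    ‖cg U p‖ ≤ 1 + 12 * √ε := by
  have hq : 0 < √ε := Real.sqrt_pos.2 hε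
  have hqq : √ε * √ε = ε := Real.mul_self_sqrt hε.le
  have hq1 : √ε ≤ 1 / 2 := by
    nlinarith
  have hsub : ∀ z ∈ ball p (√ε), z ∈ ball (0:ℂ) 2 := by
    intro z hz
    rw [mem_ball, dist_eq_norm] at hz
    rw [mem_ball_zero_iff]
    have : ‖z‖ ≤ ‖p‖ + ‖z - p‖ := by
      have := norm_add_le p (z - p); simpa using this
    linarith
  have himz : ∀ z ∈ ball p (√ε), |z.im - p.im| < √ε := by
    intro z hz
    rw [mem_ball, dist_eq_norm] at hz
    exact lt_of_le_of_lt (by simpa using Complex.abs_im_le_norm (z - p)) hz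
  have hes : 0 < ε / s := by positivity
  obtain ⟨σ, hσ, hσim⟩ : ∃ σ : ℝ, (σ = 1 ∨ σ = -1) ∧ ∀ z ∈ ball p (√ε), ε / s < σ * z.im := by
    rcases le_total 0 p.im with h | h
    · refine ⟨1, Or.inl rfl, fun z hz => ?_⟩
      rw [abs_of_nonneg h] at him
      have := (abs_lt.1 (himz z hz)).1
      linarith
    · refine ⟨-1, Or.inr rfl, fun z hz => ?_⟩
      rw [abs_of_nonpos h] at him
      have := (abs_lt.1 (himz z hz)).2
      linarith
  have habs : ∀ z ∈ ball p (√ε), |z.im| = σ * z.im := by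
    intro z hz
    have h1 := hσim z hz
    have h2 : 0 < σ * z.im := hes.trans h1
    rw [← abs_of_pos h2, abs_mul]
    rcases hσ with h | h <;> simp [h]
  have hlin : ∀ z, HarmonicAt (fun z : ℂ => s * σ * z.im) z := by
    intro z
    have h1 : HarmonicAt (fun z : ℂ => z.im) z := (analyticAt_id (𝕜 := ℂ)).harmonicAt_im
    exact h1.const_smul (c := s * σ)
  have hpos : ∀ z ∈ ball p (√ε), 0 < U z := by
    intro z hz
    have h1 := (abs_lt.1 (hc z (hsub z hz))).1
    rw [habs z hz] at h1
    have h2 := hσim z hz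
    have h3 : ε < s * (σ * z.im) := by
      rw [div_lt_iff₀ hs] at h2; linarith
    linarith
  have hW := grad_est (U - fun z : ℂ => s * σ * z.im) p (√ε) ε hq hε
    (fun z hz => (hH z (hsub z hz) (hpos z hz)).sub (hlin z))
    (fun z hz => by
      have h1 := hc z (hsub z hz)
      rw [habs z hz] at h1
      have : (U - fun z : ℂ => s * σ * z.im) z = U z - s * (σ * z.im) := by
        simp; ring
      rw [this]; exact h1.le)
  have hp0 := mem_ball_self (x := p) hq
  have hUd : DifferentiableAt ℝ U p :=
    (hH p (hsub p hp0) (hpos p hp0)).1.differentiableAt two_ne_zero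
  have hl : HasFDerivAt (fun z : ℂ => s * σ * z.im) ((s * σ) • Complex.imCLM) p :=
    Complex.imCLM.hasFDerivAt.const_smul (s * σ)
  have hcgs : cg U p = cg (U - fun z : ℂ => s * σ * z.im) p - I * (s * σ : ℝ) := by
    unfold cg
    rw [(hUd.hasFDerivAt.sub hl).fderiv]
    simp; ring
  have hd : ε / √ε = √ε := by rw [div_eq_iff hq.ne']; exact hqq.symm
  rw [hd] at hW
  rw [hcgs]
  refine (norm_sub_le _ _).trans ?_
  have : ‖I * ((s * σ : ℝ) : ℂ)‖ ≤ 1 := by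
    rw [norm_mul, Complex.norm_I, one_mul, Complex.norm_real, Real.norm_eq_abs, abs_mul]
    rcases hσ with h | h <;> simp [h, abs_of_pos hs, hs1]
  linarith

lemma main_complex (U : ℂ → ℝ) (L s ε : ℝ) (hL : 1 < L) (hs : 0 < s) (hs1 : s ≤ 1) (hε : 0 < ε)
    (hε1 : 18 * ε ≤ 1)
    (hH : ∀ z ∈ ball (0:ℂ) 2, 0 < U z → HarmonicAt U z)
    (hc : ∀ z ∈ ball (0:ℂ) 2, abs (U z - s * abs z.im) < ε)
    (hLip : ∀ z ∈ ball (0:ℂ) 2, 0 < U z → ‖cg U z‖ ≤ L)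
    (hF : ∀ z ∈ ball (0:ℂ) 2, ¬ 0 < U z → z ∈ closure {z ∈ ball (0:ℂ) 2 | 0 < U z} →
      Tendsto (fun z => ‖cg U z‖) (𝓝[{z ∈ ball (0:ℂ) 2 | 0 < U z}] z) (𝓝 1))
    (x0 : ℂ) (hx0 : ‖x0‖ < 1 / 2) (hU0 : 0 < U x0) :
    ‖cg U x0‖ ≤ (1 + 12 * √ε) * L ^ (18 * ε) := by
  by_contra hcon
  push Not at hcon
  have hq : 0 < √ε := Real.sqrt_pos.2 hε
  have hqq : √ε * √ε = ε := Real.mul_self_sqrt hε.le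
  have hq1 : √ε ≤ 1 / 2 := by
    nlinarith
  have hK : 0 < Real.log L := Real.log_pos hL
  have hLp : 0 < L ^ (18 * ε) := Real.rpow_pos_of_pos (by linarith) _
  have hlogLp : Real.log (L ^ (18 * ε)) = 18 * ε * Real.log L := Real.log_rpow (by linarith) _
  set m := ‖cg U x0‖ / L ^ (18 * ε) with hm
  have hm1 : 1 + 12 * √ε < m := by rw [hm, lt_div_iff₀ hLp]; exact hcon
  have hm0 : 1 < m := by linarith
  have hx0m : ‖cg U x0‖ = m * L ^ (18 * ε) := by rw [hm]; field_simp
  have hLp1 : 1 ≤ L ^ (18 * ε) := Real.one_le_rpow hL.le (by positivity)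
  set Ω : Set ℂ := {z ∈ ball (0:ℂ) 2 | 0 < U z} with hΩ
  have hcb : ∀ z ∈ closedBall x0 1, ‖z‖ < 3 / 2 := by
    intro z hz
    rw [mem_closedBall, dist_eq_norm] at hz
    have : ‖z‖ ≤ ‖x0‖ + ‖z - x0‖ := by
      have := norm_add_le x0 (z - x0); simpa using this
    linarith
  have hcb2 : ∀ z ∈ closedBall x0 1, z ∈ ball (0:ℂ) 2 := by
    intro z hz
    rw [mem_ball_zero_iff]; linarith [hcb z hz]
  have hΩo : ∀ z ∈ Ω, Ω ∈ 𝓝 z := by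
    intro z hz
    have h1 := (hH z hz.1 hz.2).1.continuousAt
    filter_upwards [isOpen_ball.mem_nhds hz.1, h1.tendsto.eventually_const_lt hz.2] with w a b using ⟨a, b⟩
  set T : Set ℂ := {z ∈ closedBall x0 1 | z ∈ Ω ∧ m ≤ ‖cg U z‖} with hT
  have hTcl : IsClosed T := by
    rw [isClosed_iff_clusterPt]
    intro z hz
    have hfr : ∃ᶠ w in 𝓝 z, w ∈ T := by
      rw [← mem_closure_iff_frequently]; exact mem_closure_iff_clusterPt.2 hz
    have hzb : z ∈ closedBall x0 1 :=
      isClosed_closedBall.closure_subset_iff.2 (fun w hw => hw.1) (mem_closure_iff_clusterPt.2 hz)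
    by_cases hzU : 0 < U z
    · refine ⟨hzb, ⟨hcb2 z hzb, hzU⟩, ?_⟩
      by_contra hlt
      push Not at hlt
      have h1 := (cg_cont (hH z (hcb2 z hzb) hzU)).eventually_lt_const hlt
      obtain ⟨w, hw1, hw2⟩ := (hfr.and_eventually h1).exists
      exact absurd hw1.2.2 (not_le.2 hw2)
    · exfalso
      have hzcl : z ∈ closure Ω :=
        closure_mono (fun w hw => hw.2.1) (mem_closure_iff_clusterPt.2 hz)
      have h1 := (hF z (hcb2 z hzb) hzU hzcl).eventually_lt_const hm0
      rw [eventually_nhdsWithin_iff] at h1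
      obtain ⟨w, hw1, hw2⟩ := (hfr.and_eventually h1).exists
      exact absurd hw1.2.2 (not_le.2 (hw2 hw1.2.1))
  have hTc : IsCompact T := (isCompact_closedBall x0 1).of_isClosed_subset hTcl (fun w hw => hw.1)
  have hx0T : x0 ∈ T := by
    refine ⟨mem_closedBall_self zero_le_one, ⟨hcb2 _ (mem_closedBall_self zero_le_one), hU0⟩, ?_⟩
    rw [hx0m]
    nlinarith
  set ψ : ℂ → ℝ := fun z => Real.log ‖cg U z‖ + 2 * Real.log L * U z ^ 2
    - Real.log L * ‖z - x0‖ ^ 2 with hψ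
  have hψc : ContinuousOn ψ T := by
    intro z hz
    have h1 := hH z hz.2.1.1 hz.2.1.2
    have h2 : ContinuousAt (fun z => Real.log ‖cg U z‖) z :=
      (cg_cont h1).log (by linarith [hz.2.2])
    have h3 := h1.1.continuousAt
    have h4 : ContinuousAt ψ z := by
      refine (h2.add ((h3.pow 2).const_mul _)).sub ?_
      fun_prop
    exact h4.continuousWithinAt
  obtain ⟨p, hpT, hpmax⟩ := hTc.exists_isMaxOn ⟨x0, hx0T⟩ hψc
  obtain ⟨hpb, hpΩ, hpm⟩ := id hpT
  have hge : Real.log m + 18 * ε * Real.log L < ψ p := by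
    have h1 : ψ x0 ≤ ψ p := hpmax hx0T
    have h2 : ψ x0 = Real.log m + 18 * ε * Real.log L + 2 * Real.log L * U x0 ^ 2 := by
      simp only [hψ]
      rw [hx0m, Real.log_mul (by linarith) hLp.ne', hlogLp]; simp
    have h3 : 0 < 2 * Real.log L * U x0 ^ 2 := by positivity
    linarith
  have him : |p.im| < √ε + ε / s := by
    by_contra h
    push Not at h
    have := far_est U s ε hs hs1 hε hε1 hH hc p (hcb p hpb) h
    linarith
  have hUp : U p ≤ 3 * √ε := by
    have h1 := (abs_lt.1 (hc p hpΩ.1)).2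
    have h2 : s * |p.im| ≤ s * (√ε + ε / s) := by gcongr
    have h3 : s * (√ε + ε / s) = s * √ε + ε := by field_simp
    have h4 : s * √ε ≤ √ε := by nlinarith
    nlinarith
  have hUp2 : 2 * Real.log L * U p ^ 2 ≤ 18 * ε * Real.log L := by
    have h1 : U p ^ 2 ≤ 9 * ε := by
      have := hpΩ.2
      nlinarith
    nlinarith
  have hNL := hLip p hpΩ.1 hpΩ.2
  have hpdist : ‖p - x0‖ < 1 := by
    rw [mem_closedBall, dist_eq_norm] at hpb
    refine lt_of_le_of_ne hpb fun h => ?_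
    have h1 : Real.log ‖cg U p‖ ≤ Real.log L := Real.log_le_log (by linarith) hNL
    have h2 : 0 < Real.log m := Real.log_pos hm0
    simp only [hψ] at hge
    rw [h] at hge
    linarith
  have hpm' : m < ‖cg U p‖ := by
    have h1 : Real.log m < Real.log ‖cg U p‖ := by
      have : 0 ≤ Real.log L * ‖p - x0‖ ^ 2 := by positivity
      simp only [hψ] at hge
      linarith
    exact (Real.log_lt_log_iff (by linarith) (by linarith)).1 h1
  refine no_local_max U p x0 (Real.log L) hK (hH p hpΩ.1 hpΩ.2) (by linarith) ?_
  have h1 : ball x0 1 ∈ 𝓝 p := isOpen_ball.mem_nhds (by rwa [mem_ball, dist_eq_norm])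
  filter_upwards [h1, hΩo p hpΩ, (cg_cont (hH p hpΩ.1 hpΩ.2)).tendsto.eventually_const_lt hpm'] with w a b c
  exact hpmax ⟨ball_subset_closedBall a, b, le_of_lt c⟩

noncomputable def ee : ℂ ≃ₗᵢ[ℝ] EuclideanSpace ℝ (Fin 2) := Complex.orthonormalBasisOneI.repr

lemma ee_one : ee 1 = EuclideanSpace.single (0 : Fin 2) (1:ℝ) := by
  ext i; fin_cases i <;> simp [ee]

lemma ee_I : ee I = EuclideanSpace.single (1 : Fin 2) (1:ℝ) := by
  ext i; fin_cases i <;> simp [ee]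

lemma ee_im (z : ℂ) : (ee z) 1 = z.im := by
  simp [ee]

lemma fderiv_ee (u : EuclideanSpace ℝ (Fin 2) → ℝ) (z v : ℂ) :
    fderiv ℝ (fun z => u (ee z)) z v = fderiv ℝ u (ee z) (ee v) := by
  have := ee.toContinuousLinearEquiv.comp_right_fderiv (f := u) (x := z)
  have h2 := congrArg (fun l => l v) this
  exact h2

lemma norm_cg_ee (u : EuclideanSpace ℝ (Fin 2) → ℝ) (z : ℂ) :
    ‖cg (fun z => u (ee z)) z‖ = ‖gradient u (ee z)‖ := by
  rw [← sq_eq_sq₀ (norm_nonneg _) (norm_nonneg _), cg_normSq, fderiv_ee, fderiv_ee, ee_one, ee_I,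
    EuclideanSpace.norm_sq_eq]
  have h : ∀ i, fderiv ℝ u (ee z) (EuclideanSpace.single i 1) = (gradient u (ee z)) i := by
    intro i
    have : fderiv ℝ u (ee z) (EuclideanSpace.single i 1)
        = inner ℝ (gradient u (ee z)) (EuclideanSpace.single i 1) := by
      simp [gradient]
    rw [this, EuclideanSpace.inner_single_right]
    simp only [one_mul, conj_trivial]
  rw [h, h]
  simp

lemma second_ee (u : EuclideanSpace ℝ (Fin 2) → ℝ) (z v : ℂ) (hu : ContDiffAt ℝ 2 u (ee z)) :
    iteratedFDeriv ℝ 2 (fun z => u (ee z)) z ![v, v] =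
      fderiv ℝ (fun y => fderiv ℝ u y (ee v)) (ee z) (ee v) := by
  have hU : ContDiffAt ℝ 2 (fun z => u (ee z)) z :=
    hu.comp z ee.toContinuousLinearEquiv.contDiff.contDiffAt
  have hd : DifferentiableAt ℝ (fderiv ℝ (fun z => u (ee z))) z :=
    (hU.fderiv_right (m := 1) (by norm_num)).differentiableAt one_ne_zero
  rw [iteratedFDeriv_two_apply]
  have h1 : fderiv ℝ (fun y => fderiv ℝ (fun z => u (ee z)) y v) z v
      = fderiv ℝ (fderiv ℝ (fun z => u (ee z))) z v v := by
    rw [fderiv_clm_apply hd (by fun_prop)]; simp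
  have h2 : (fun y => fderiv ℝ (fun z => u (ee z)) y v)
      = fun y => (fun x => fderiv ℝ u x (ee v)) (ee y) := by
    funext y; exact fderiv_ee u y v
  have h3 := fderiv_ee (fun x => fderiv ℝ u x (ee v)) z v
  rw [h2, h3] at h1
  simpa using h1.symm

end GI


namespace GI
open Topology InnerProductSpace Complex

lemma final_arith (L ε : ℝ) (hL : 1 < L) (hε : 0 < ε) (hε1 : 18 * ε ≤ 1) :
    (1 + 12 * √ε) * L ^ (18 * ε) ≤ 1 + 300 * L * √ε := by
  have hq : 0 < √ε := Real.sqrt_pos.2 hε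
  have hqq : √ε * √ε = ε := Real.mul_self_sqrt hε.le
  have hq1 : √ε ≤ 1 / 2 := by
    nlinarith
  have h1 : L ^ (18 * ε) ≤ 1 + 18 * ε * (L - 1) := by
    have := rpow_one_add_le_one_add_mul_self (s := L - 1) (by linarith) (p := 18 * ε)
      (by positivity) hε1
    simpa using this
  have h2 : 18 * ε * (L - 1) ≤ 18 * √ε * L := by
    have : ε ≤ √ε := by nlinarith
    have : ε * (L - 1) ≤ √ε * L := mul_le_mul this (by linarith) (by linarith) hq.le
    linarith
  calc (1 + 12 * √ε) * L ^ (18 * ε) ≤ (1 + 12 * √ε) * (1 + 18 * √ε * L) := by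
        gcongr; linarith
    _ ≤ 1 + 300 * L * √ε := by
      have a : √ε ≤ L * √ε := by nlinarith
      have b : √ε * (√ε * L) ≤ 1 / 2 * (√ε * L) := by gcongr
      nlinarith
end GI

/-- Gradient improvement near a wedge: there is a universal constant `c > 0`
such that if `u` is a classical solution of the one-phase free boundary problem in `B₂ ⊂ ℝ²`
with Lipschitz constant `L` and `|u(x) − s|x₂|| < ε` in `B₂` for some `0 < s ≤ 1` and `ε > 0`,
then `‖∇u‖_{L^∞(B_{1/2})} ≤ 1 + c L √ε`. -/
theorem gradient_improvement_near_wedge :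
    ∃ c > (0 : ℝ),
      ∀ (u : EuclideanSpace ℝ (Fin 2) → ℝ) (L s ε : ℝ)
        (pos F : Set (EuclideanSpace ℝ (Fin 2))),
        0 < L → 0 < s → s ≤ 1 → 0 < ε →
        ContinuousOn u (ball (0 : EuclideanSpace ℝ (Fin 2)) 2) →
        (∀ x, 0 ≤ u x) →
        LipschitzOnWith (Real.toNNReal L) u (ball (0 : EuclideanSpace ℝ (Fin 2)) 2) →
        pos = {x ∈ ball (0 : EuclideanSpace ℝ (Fin 2)) 2 | 0 < u x} →
        F = frontier pos ∩ ball (0 : EuclideanSpace ℝ (Fin 2)) 2 →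
        ContDiffOn ℝ 2 u pos →
        (∀ x ∈ pos, lap u x = 0) →
        (∀ x₀ ∈ F, Tendsto (fun x => ‖gradient u x‖) (nhdsWithin x₀ pos) (nhds 1)) →
        (∀ x ∈ ball (0 : EuclideanSpace ℝ (Fin 2)) 2, abs (u x - s * abs (x 1)) < ε) →
        ∀ x ∈ ball (0 : EuclideanSpace ℝ (Fin 2)) (1 / 2), x ∈ pos →
          ‖gradient u x‖ ≤ 1 + c * L * Real.sqrt ε := by
  refine ⟨300, by norm_num, ?_⟩
  intro u L s ε pos F hL hs hs1 hε hcont hu0 hLip hpos hF hC2 hlap hgrad hclose x hx hxp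
  have hopen : IsOpen pos := by
    have h1 := hcont.isOpen_inter_preimage isOpen_ball isOpen_Ioi (t := Set.Ioi 0)
    rw [hpos]; exact h1
  have hposb : ∀ y ∈ pos, y ∈ ball (0 : EuclideanSpace ℝ (Fin 2)) 2 := by
    intro y hy; rw [hpos] at hy; exact hy.1
  have hgL : ∀ y ∈ pos, ‖gradient u y‖ ≤ L := by
    intro y hy
    have h1 := norm_fderiv_le_of_lipschitzOn ℝ (isOpen_ball.mem_nhds (hposb y hy)) hLip
    rw [Real.coe_toNNReal L hL.le] at h1
    rw [gradient, LinearIsometryEquiv.norm_map]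
    exact h1
  have hq : 0 < √ε := Real.sqrt_pos.2 hε
  have hqq : √ε * √ε = ε := Real.mul_self_sqrt hε.le
  rcases le_or_gt L 1 with hL1 | hL1
  · have : 0 ≤ 300 * L * √ε := by positivity
    linarith [hgL x hxp]
  rcases le_or_gt (18 * ε) 1 with hε1 | hε1
  swap
  · have : 1 / 300 ≤ √ε := by
      by_contra h
      push Not at h
      nlinarith
    have : 1 ≤ 300 * √ε := by linarith
    have h2 : L * 1 ≤ L * (300 * √ε) := by gcongr
    linarith [hgL x hxp]
  refine le_trans ?_ (GI.final_arith L ε hL1 hε hε1)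
  set U : ℂ → ℝ := fun z => u (GI.ee z) with hU
  have hball : ∀ z : ℂ, ∀ r, GI.ee z ∈ ball (0 : EuclideanSpace ℝ (Fin 2)) r ↔
      z ∈ ball (0:ℂ) r := by
    intro z r; simp
  have hΩ : {z ∈ ball (0:ℂ) 2 | 0 < U z} = GI.ee ⁻¹' pos := by
    rw [hpos]; ext z; simp [hU]
  have hmem : ∀ z ∈ ball (0:ℂ) 2, 0 < U z → GI.ee z ∈ pos := by
    intro z hz hz'
    have : z ∈ GI.ee ⁻¹' pos := hΩ ▸ (⟨hz, hz'⟩ : z ∈ {z ∈ ball (0:ℂ) 2 | 0 < U z})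
    exact this
  obtain ⟨z, rfl⟩ := GI.ee.surjective x
  rw [← GI.norm_cg_ee]
  refine GI.main_complex U L s ε hL1 hs hs1 hε hε1 ?_ ?_ ?_ ?_ z ?_ ?_
  · intro w hw hw'
    have hwp := hmem w hw hw'
    have hcd : ∀ y ∈ pos, ContDiffAt ℝ 2 u y := fun y hy => hC2.contDiffAt (hopen.mem_nhds hy)
    refine ⟨(hcd _ hwp).comp w GI.ee.toContinuousLinearEquiv.contDiff.contDiffAt, ?_⟩
    have hev : ∀ᶠ y in nhds w, GI.ee y ∈ pos :=
      GI.ee.continuous.continuousAt.preimage_mem_nhds (hopen.mem_nhds hwp)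
    filter_upwards [hev] with y hy
    rw [InnerProductSpace.laplacian_eq_iteratedFDeriv_complexPlane]
    have h1 := GI.second_ee u y 1 (hcd _ hy)
    have h2 := GI.second_ee u y Complex.I (hcd _ hy)
    have h3 := hlap _ hy
    rw [lap, Fin.sum_univ_two] at h3
    rw [GI.ee_one] at h1
    rw [GI.ee_I] at h2
    simp only [Pi.zero_apply]
    rw [← h3, ← h1, ← h2]
  · intro w hw
    have := hclose (GI.ee w) ((hball w 2).2 hw)
    rwa [GI.ee_im] at this
  · intro w hw hw'
    rw [GI.norm_cg_ee]
    exact hgL _ (hmem w hw hw')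
  · intro w hw hw' hcl
    rw [hΩ] at hcl ⊢
    have hwF : GI.ee w ∈ F := by
      rw [hF]
      refine ⟨⟨?_, ?_⟩, (hball w 2).2 hw⟩
      · have h1 : GI.ee w ∈ GI.ee '' closure (GI.ee ⁻¹' pos) := ⟨w, hcl, rfl⟩
        have h2 := image_closure_subset_closure_image GI.ee.continuous h1
        exact closure_mono (Set.image_preimage_subset _ _) h2
      · rw [hopen.interior_eq]
        intro h
        rw [hpos] at h
        exact hw' h.2
    have h1 := hgrad _ hwF
    have h2 : Tendsto GI.ee (nhdsWithin w (GI.ee ⁻¹' pos)) (nhdsWithin (GI.ee w) pos) :=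
      GI.ee.continuous.continuousWithinAt.tendsto_nhdsWithin (fun y hy => hy)
    have h3 := h1.comp h2
    refine h3.congr fun y => ?_
    exact (GI.norm_cg_ee u y).symm
  · have := (hball z (1 / 2)).1 hx
    simpa using this
  · rw [hpos] at hxp; exact hxp.2
end
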